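/- arXiv:2206.03347 — 2 statements merged into one kernel-verified Lean document; each statement's English description precedes it below -/
import Mathlib

section
/- Let μ⁻, μ⁺ be probability measures on ℝ^d with compact supports X⁻, X⁺ and let c : X⁻ × X⁺ → ℝ be continuous. Assume there exists an optimal transport plan γ₀ ∈ Opt(μ⁻,μ⁺) with Ent(γ₀ | μ⁻⊗μ⁺) < +∞. Then there is a unique coupling γ* ∈ Opt(μ⁻,μ⁺) minimizing Ent(· | μ⁻⊗μ⁺) over Opt(μ⁻,μ⁺), and for every ε > 0, denoting γ_ε the minimizer of the entropic problem at parameter ε, the plans γ_ε converge narrowly (weakly against bounded continuous functions on ℝ^d × ℝ^d) to γ* as ε → 0⁺. -/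
open MeasureTheory Real Set Filter Classical
open scoped ENNReal NNReal Topology

noncomputable section

/-- Relative entropy (Kullback–Leibler divergence) `Ent(γ | q)`, with values in `EReal`:
it equals `∫ ρ log ρ dq` if `γ = ρ·q` (with `ρ log ρ` integrable) and `+∞` otherwise. -/
def Ent {α : Type*} [MeasurableSpace α] (γ q : Measure α) : EReal :=
  if γ ≪ q ∧ Integrable (fun x => ((γ.rnDeriv q) x).toReal * Real.log ((γ.rnDeriv q) x).toReal) q
  then ((∫ x, ((γ.rnDeriv q) x).toReal * Real.log ((γ.rnDeriv q) x).toReal ∂q : ℝ) : EReal)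
  else ⊤

/-- Entropic optimal transport cost
`v_ε = inf { ∫ c dγ + ε Ent(γ | μ⁻ ⊗ μ⁺) : γ coupling of μ⁻ and μ⁺ }`. -/
def entCost {α β : Type*} [MeasurableSpace α] [MeasurableSpace β]
    (μm : Measure α) (μp : Measure β) (c : α × β → ℝ) (ε : ℝ) : EReal :=
  sInf {v : EReal | ∃ γ : Measure (α × β), IsProbabilityMeasure γ ∧ γ.fst = μm ∧ γ.snd = μp ∧
    v = ((∫ p, c p ∂γ : ℝ) : EReal) + (ε : EReal) * Ent γ (μm.prod μp)}

/-- Support of a measure: the set of points all of whose open neighbourhoods have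
positive measure. -/
def msupport {α : Type*} [TopologicalSpace α] [MeasurableSpace α] (μ : Measure α) : Set α :=
  {x | ∀ U : Set α, IsOpen U → x ∈ U → μ U ≠ 0}

/-
Strong convexity drives the argument. On nonnegative densities of bounded mass the relative entropy
`H` is strongly convex for the `L¹` norm, the transport cost `J` is linear and continuous, and the
densities of couplings with entropy at most `r` form a closed set. Let `F ε` be the density of
`γ_ε`, which minimizes `J + ε H`. As `ε` decreases, `J (F ε)` decreases and `H (F ε)` increases but
stays below the entropy of any optimal plan, so `H (F ε)` converges. Strong convexity bounds
`‖F s - F t‖²` by a multiple of `|H (F s) - H (F t)|`, hence `F ε` is Cauchy in `L¹`, and its limit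
minimizes `H` among the minimizers of `J`.
-/

open InformationTheory

section Selection

/-- `F` is a path of regularized minimizers: `F ε` minimizes over `K` the objective `J` penalized
by `ε * H`, for each `ε > 0`. The values `F ε` for `ε ≤ 0` are irrelevant. -/
def IsRegularizedPath {E : Type*} (K : Set E) (J H : E → ℝ) (F : ℝ → E) : Prop :=
  ∀ ε, 0 < ε → F ε ∈ K ∧ IsMinOn (fun x => J x + ε * H x) K (F ε)

namespace IsRegularizedPath

variable {E : Type*} {K : Set E} {J H : E → ℝ} {F : ℝ → E} {x₀ : E} {ε : ℝ}

lemma mem (hF : IsRegularizedPath K J H F) (hε : 0 < ε) : F ε ∈ K := (hF ε hε).1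

lemma le (hF : IsRegularizedPath K J H F) (hε : 0 < ε) {x : E} (hx : x ∈ K) :
    J (F ε) + ε * H (F ε) ≤ J x + ε * H x :=
  (hF ε hε).2 hx

lemma antitoneOn_penalty (hF : IsRegularizedPath K J H F) :
    AntitoneOn (fun ε => H (F ε)) (Ioi 0) := by
  intro s hs t ht hst
  rcases hst.eq_or_lt with rfl | hst
  · exact le_rfl
  · have h₁ := hF.le hs (hF.mem ht)
    have h₂ := hF.le ht (hF.mem hs)
    nlinarith

lemma monotoneOn_objective (hF : IsRegularizedPath K J H F) :
    MonotoneOn (fun ε => J (F ε)) (Ioi 0) := by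
  intro s hs t ht hst
  have h := mul_le_mul_of_nonneg_left (hF.antitoneOn_penalty hs ht hst) (le_of_lt hs)
  linarith [hF.le hs (hF.mem ht)]

lemma penalty_le (hF : IsRegularizedPath K J H F) (hx₀ : x₀ ∈ K) (hmin : IsMinOn J K x₀)
    (hε : 0 < ε) : H (F ε) ≤ H x₀ := by
  have h₁ := hF.le hε hx₀
  have h₂ : J x₀ ≤ J (F ε) := hmin (hF.mem hε)
  exact le_of_mul_le_mul_left (by linarith) hε

lemma tendsto_objective (hF : IsRegularizedPath K J H F) (hx₀ : x₀ ∈ K)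
    (hmin : IsMinOn J K x₀) : Tendsto (fun ε => J (F ε)) (𝓝[>] 0) (𝓝 (J x₀)) := by
  have hbound : Tendsto (fun ε => J x₀ + ε * (H x₀ - H (F 1))) (𝓝[>] 0) (𝓝 (J x₀)) := by
    have h : Continuous fun ε : ℝ => J x₀ + ε * (H x₀ - H (F 1)) := by fun_prop
    simpa only [zero_mul, add_zero] using (h.tendsto 0).mono_left nhdsWithin_le_nhds
  refine tendsto_of_tendsto_of_tendsto_of_le_of_le' tendsto_const_nhds hbound ?_ ?_
  · filter_upwards [self_mem_nhdsWithin] with ε hε using hmin (hF.mem hε)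
  · filter_upwards [Ioc_mem_nhdsGT one_pos] with ε ⟨hε, hε1⟩
    have h₁ := hF.le hε hx₀
    have h₂ := mul_le_mul_of_nonneg_left
      (hF.antitoneOn_penalty hε (mem_Ioi.2 one_pos) hε1) hε.le
    simp only at h₂
    linarith

end IsRegularizedPath

variable {E : Type*} [NormedAddCommGroup E] [NormedSpace ℝ E] {K : Set E} {J H f : E → ℝ} {m : ℝ}

lemma strongConvexOn_of_subset {K' : Set E} (hf : StrongConvexOn K m f) (hsub : K' ⊆ K)
    (hK' : Convex ℝ K') : StrongConvexOn K' m f :=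
  ⟨hK', fun _ hx _ hy => hf.2 (hsub hx) (hsub hy)⟩

lemma strongConvexOn_const_mul (hf : StrongConvexOn K m f) {c : ℝ} (hc : 0 ≤ c) :
    StrongConvexOn K (c * m) fun x => c * f x := by
  refine ⟨hf.1, fun x hx y hy a b ha hb hab => ?_⟩
  have h := mul_le_mul_of_nonneg_left (hf.2 hx hy ha hb hab) hc
  simp only [smul_eq_mul] at h ⊢
  linarith

lemma add_sq_norm_sub_le_of_isMinOn (hf : StrongConvexOn K m f) {x y : E} (hx : x ∈ K)
    (hmin : IsMinOn f K x) (hy : y ∈ K) : f x + m / 2 * ‖x - y‖ ^ 2 ≤ f y := by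
  have hsegment : ∀ a ∈ Ioo (0 : ℝ) 1, f x + a * (m / 2 * ‖x - y‖ ^ 2) ≤ f y := by
    rintro a ⟨ha, ha1⟩
    have hab : a + (1 - a) = 1 := add_sub_cancel _ _
    have hconv := hf.2 hx hy ha.le (sub_nonneg.2 ha1.le) hab
    have hle : f x ≤ f (a • x + (1 - a) • y) := hmin (hf.1 hx hy ha.le (sub_nonneg.2 ha1.le) hab)
    simp only [smul_eq_mul] at hconv
    refine le_of_mul_le_mul_left ?_ (sub_pos.2 ha1)
    linarith
  have hlim : Tendsto (fun a : ℝ => f x + a * (m / 2 * ‖x - y‖ ^ 2)) (𝓝[<] 1)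
      (𝓝 (f x + m / 2 * ‖x - y‖ ^ 2)) := by
    have h : Continuous fun a : ℝ => f x + a * (m / 2 * ‖x - y‖ ^ 2) := by fun_prop
    simpa only [one_mul] using (h.tendsto 1).mono_left nhdsWithin_le_nhds
  refine le_of_tendsto hlim ?_
  filter_upwards [Ioo_mem_nhdsLT one_pos] with a ha using hsegment a ha

lemma convex_setOf_isMinOn (hJ : ConvexOn ℝ K J) : Convex ℝ {x ∈ K | IsMinOn J K x} := by
  rintro x ⟨hx, hxmin⟩ y ⟨hy, hymin⟩ a b ha hb hab
  refine ⟨hJ.1 hx hy ha hb hab, fun z hz => ?_⟩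
  calc J (a • x + b • y) ≤ a • J x + b • J y := hJ.2 hx hy ha hb hab
    _ ≤ a • J z + b • J z := by
        gcongr
        exacts [hxmin hz, hymin hz]
    _ = J z := Convex.combo_self hab _

lemma eq_of_isMinOn_setOf_isMinOn (hJ : ConvexOn ℝ K J) (hH : StrongConvexOn K m H) (hm : 0 < m)
    {x y : E} (hxA : x ∈ {z ∈ K | IsMinOn J K z}) (hx : IsMinOn H {z ∈ K | IsMinOn J K z} x)
    (hyA : y ∈ {z ∈ K | IsMinOn J K z}) (hy : IsMinOn H {z ∈ K | IsMinOn J K z} y) : x = y :=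
  ((strongConvexOn_of_subset hH (sep_subset _ _) (convex_setOf_isMinOn hJ)).strictConvexOn
    hm).eq_of_isMinOn hx hy hxA hyA

namespace IsRegularizedPath

variable {F : ℝ → E} {x₀ : E}

/-- Strong convexity at `F t` controls the objective plus penalty at `F s`; monotonicity of `J`
along the path then removes the objective. -/
lemma penalty_add_sq_norm_sub_le (hF : IsRegularizedPath K J H F) (hJ : ConvexOn ℝ K J)
    (hH : StrongConvexOn K m H) {s t : ℝ} (hs : 0 < s) (hst : s ≤ t) :
    H (F t) + m / 2 * ‖F t - F s‖ ^ 2 ≤ H (F s) := by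
  have ht := hs.trans_le hst
  have hconv : StrongConvexOn K (t * m) (J + fun x => t * H x) := by
    simpa only [StrongConvexOn, zero_add] using
      (uniformConvexOn_zero.2 hJ).add (strongConvexOn_const_mul hH ht.le)
  have hgrowth := add_sq_norm_sub_le_of_isMinOn hconv (hF.mem ht) (hF t ht).2 (hF.mem hs)
  have hobj := hF.monotoneOn_objective hs ht hst
  simp only [Pi.add_apply] at hgrowth hobj
  refine le_of_mul_le_mul_left ?_ ht
  linarith

lemma sq_norm_sub_le (hF : IsRegularizedPath K J H F) (hJ : ConvexOn ℝ K J)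
    (hH : StrongConvexOn K m H) {s t : ℝ} (hs : 0 < s) (ht : 0 < t) :
    m / 2 * ‖F s - F t‖ ^ 2 ≤ |H (F s) - H (F t)| := by
  rcases le_total s t with hst | hts
  · rw [norm_sub_rev]
    linarith [hF.penalty_add_sq_norm_sub_le hJ hH hs hst, le_abs_self (H (F s) - H (F t))]
  · linarith [hF.penalty_add_sq_norm_sub_le hJ hH ht hts, neg_abs_le (H (F s) - H (F t))]

lemma cauchy_map (hF : IsRegularizedPath K J H F) (hJ : ConvexOn ℝ K J)
    (hH : StrongConvexOn K m H) (hm : 0 < m) (hx₀ : x₀ ∈ K) (hmin : IsMinOn J K x₀) :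
    Cauchy (map F (𝓝[>] 0)) := by
  have hbdd : BddAbove ((fun ε => H (F ε)) '' Ioi 0) :=
    ⟨H x₀, forall_mem_image.2 fun ε hε => hF.penalty_le hx₀ hmin hε⟩
  have hcauchy := (hF.antitoneOn_penalty.tendsto_nhdsGT hbdd).cauchy_map
  refine Metric.cauchy_iff.2 ⟨inferInstance, fun e he => ?_⟩
  obtain ⟨S, hS, hSe⟩ := (Metric.cauchy_iff.1 hcauchy).2 (m / 2 * e ^ 2) (by positivity)
  refine ⟨F '' (Ioi 0 ∩ (fun ε => H (F ε)) ⁻¹' S),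
    image_mem_map (inter_mem self_mem_nhdsWithin hS), ?_⟩
  rintro _ ⟨s, ⟨hs, hsS⟩, rfl⟩ _ ⟨t, ⟨ht, htS⟩, rfl⟩
  have h := (hF.sq_norm_sub_le hJ hH hs ht).trans_lt (hSe _ hsS _ htS)
  rw [dist_eq_norm]
  exact lt_of_pow_lt_pow_left₀ 2 he.le (lt_of_mul_lt_mul_left h (by positivity))

theorem exists_tendsto_isMinOn [CompleteSpace E] (hF : IsRegularizedPath K J H F)
    (hJ : ConvexOn ℝ K J) (hJ_lsc : LowerSemicontinuousOn J K) (hH : StrongConvexOn K m H)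
    (hm : 0 < m) (hH_closed : ∀ r, IsClosed {x ∈ K | H x ≤ r}) (hx₀ : x₀ ∈ K)
    (hmin : IsMinOn J K x₀) :
    ∃ g ∈ {x ∈ K | IsMinOn J K x}, IsMinOn H {x ∈ K | IsMinOn J K x} g ∧
      Tendsto F (𝓝[>] 0) (𝓝 g) := by
  obtain ⟨g, hg⟩ := CompleteSpace.complete (hF.cauchy_map hJ hH hm hx₀ hmin)
  have hsublevel : ∀ x ∈ {x ∈ K | IsMinOn J K x}, g ∈ {y ∈ K | H y ≤ H x} := fun x hx =>
    (hH_closed (H x)).mem_of_tendsto hg <| by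
      filter_upwards [self_mem_nhdsWithin] with ε hε
        using ⟨hF.mem hε, hF.penalty_le hx.1 hx.2 hε⟩
  have hgK : g ∈ K := (hsublevel x₀ ⟨hx₀, hmin⟩).1
  have hFK : Tendsto F (𝓝[>] 0) (𝓝[K] g) :=
    tendsto_nhdsWithin_iff.2 ⟨hg, by filter_upwards [self_mem_nhdsWithin] with ε hε using hF.mem hε⟩
  have hJg : J g ≤ J x₀ := le_of_forall_lt_imp_le_of_dense fun y hy =>
    ge_of_tendsto (hF.tendsto_objective hx₀ hmin)
      ((hFK.eventually (hJ_lsc g hgK y hy)).mono fun _ => le_of_lt)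
  exact ⟨g, ⟨hgK, fun x hx => hJg.trans (hmin hx)⟩, fun x hx => (hsublevel x hx).2, hg⟩

end IsRegularizedPath

end Selection

section Scalar

variable {x y a b : ℝ}

lemma sq_sqrt_sub_sqrt_le {m : ℝ} (hx : 0 ≤ x) (hm : 0 < m) :
    (√x - √m) ^ 2 ≤ x * log x - x * log m - x + m := by
  rcases hx.eq_or_lt with rfl | hx
  · simp [sq_sqrt hm.le]
  have hsx := sqrt_pos.2 hx
  have hsm := sqrt_pos.2 hm
  have hlog := log_le_sub_one_of_pos (div_pos hsm hsx)
  rw [log_div hsm.ne' hsx.ne', log_sqrt hm.le, log_sqrt hx.le] at hlog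
  have hprod : x * (√m / √x) = √x * √m := by
    nth_rewrite 1 [← mul_self_sqrt hx.le]
    field_simp
  nlinarith [mul_le_mul_of_nonneg_left hlog hx.le, sq_sqrt hx.le, sq_sqrt hm.le]

lemma mul_abs_sub_le_sq_sqrt_sub_sqrt (hx : 0 ≤ x) (hy : 0 ≤ y) (t : ℝ) :
    t * |x - y| ≤ (√x - √y) ^ 2 + t ^ 2 / 2 * (x + y) := by
  have hfactor : |x - y| = |√x - √y| * (√x + √y) := by
    rw [← abs_of_nonneg (add_nonneg (sqrt_nonneg x) (sqrt_nonneg y)), ← abs_mul]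
    congr 1
    linear_combination -sq_sqrt hx + sq_sqrt hy
  have hsum : (√x + √y) ^ 2 ≤ 2 * (x + y) := by
    nlinarith [sq_nonneg (√x - √y), sq_sqrt hx, sq_sqrt hy]
  calc t * |x - y| = t * (|√x - √y| * (√x + √y)) := by rw [hfactor]
    _ ≤ |√x - √y| ^ 2 + t ^ 2 / 4 * (√x + √y) ^ 2 := by
        linarith [sq_nonneg (|√x - √y| - t / 2 * (√x + √y))]
    _ ≤ (√x - √y) ^ 2 + t ^ 2 / 2 * (x + y) := by
        rw [sq_abs]
        linarith [mul_le_mul_of_nonneg_left hsum (sq_nonneg t)]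

lemma mul_abs_sub_le_mul_log {m : ℝ} (hx : 0 ≤ x) (hm : 0 < m) (t : ℝ) :
    t * |x - m| ≤ x * log x - x * log m - x + m + t ^ 2 / 2 * (x + m) := by
  linarith [mul_abs_sub_le_sq_sqrt_sub_sqrt hx hm.le t, sq_sqrt_sub_sqrt_le hx hm]

/-- Optimizing over `t` would bound the convexity gap of `klFun` below by a multiple of
`a * b * |x - y| ^ 2 / (x + y)`; with `t` kept free, the inequality can be integrated. -/
lemma mul_abs_sub_le_klFun_gap (hx : 0 ≤ x) (hy : 0 ≤ y) (ha : 0 ≤ a) (hb : 0 ≤ b)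
    (hab : a + b = 1) (t : ℝ) :
    a * b * (t * |x - y|) ≤
      a * klFun x + b * klFun y - klFun (a * x + b * y) + a * b * (t ^ 2 / 2 * (x + y)) := by
  obtain rfl : b = 1 - a := eq_sub_of_add_eq' hab
  rcases (add_nonneg (mul_nonneg ha hx) (mul_nonneg hb hy)).eq_or_lt with hm | hm
  · obtain ⟨hax, hby⟩ :=
      (add_eq_zero_iff_of_nonneg (mul_nonneg ha hx) (mul_nonneg hb hy)).1 hm.symm
    rcases mul_eq_zero.1 hax with rfl | rfl <;> rcases mul_eq_zero.1 hby with hb₀ | rfl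
    · norm_num at hb₀
    · simp
    · simp [← sub_eq_zero.1 hb₀]
    · simp [← add_mul]
  · have hxm : |x - (a * x + (1 - a) * y)| = (1 - a) * |x - y| := by
      rw [← abs_of_nonneg hb, ← abs_mul, abs_of_nonneg hb]
      ring_nf
    have hym : |y - (a * x + (1 - a) * y)| = a * |x - y| := by
      rw [abs_sub_comm x, ← abs_of_nonneg ha, ← abs_mul, abs_of_nonneg ha]
      ring_nf
    have h₁ := mul_le_mul_of_nonneg_left (mul_abs_sub_le_mul_log hx hm (t * (1 - a))) ha
    have h₂ := mul_le_mul_of_nonneg_left (mul_abs_sub_le_mul_log hy hm (t * a)) hb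
    rw [hxm] at h₁
    rw [hym] at h₂
    simp only [klFun_apply]
    linear_combination h₁ + h₂

end Scalar

section Entropy

variable {α : Type*} [MeasurableSpace α] {q : Measure α}

lemma isClosed_setOf_lintegral_le {X : Type*} [NormedAddCommGroup X] {p : ℝ≥0∞}
    [Fact (1 ≤ p)] {φ : X → ℝ≥0∞} (hφ : Continuous φ) (C : ℝ≥0∞) :
    IsClosed {f : Lp X p q | ∫⁻ x, φ (f x) ∂q ≤ C} := by
  refine IsSeqClosed.isClosed fun F f hF hf => ?_
  obtain ⟨n, -, hn⟩ := (tendstoInMeasure_of_tendsto_Lp hf).exists_seq_tendsto_ae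
  calc ∫⁻ x, φ (f x) ∂q
      = ∫⁻ x, liminf (fun k => φ (F (n k) x)) atTop ∂q := lintegral_congr_ae <| by
        filter_upwards [hn] with x hx using ((hφ.tendsto _).comp hx).liminf_eq.symm
    _ ≤ liminf (fun k => ∫⁻ x, φ (F (n k) x) ∂q) atTop := lintegral_liminf_le' fun k => by
        borelize X
        exact hφ.measurable.comp_aemeasurable (Lp.aestronglyMeasurable _).aemeasurable
    _ ≤ C := liminf_le_of_frequently_le' (Frequently.of_forall fun k => hF (n k))

/-- The domain of the entropy functional on `L¹`. -/
def entropyDomain (q : Measure α) : Set (α →₁[q] ℝ) :=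
  {f | 0 ≤ f ∧ Integrable (fun x => klFun (f x)) q}

/-- The relative entropy of a density. Replacing `x log x` by `klFun x = x log x + 1 - x` makes the
integrand nonnegative; over a probability measure, the value is the same for densities of mass
one. -/
def entropy (f : α →₁[q] ℝ) : ℝ := ∫ x, klFun (f x) ∂q

variable {f g : α →₁[q] ℝ} {a b : ℝ}

lemma ae_coeFn_combo (f g : α →₁[q] ℝ) (a b : ℝ) :
    ∀ᵐ x ∂q, (a • f + b • g : α →₁[q] ℝ) x = a * f x + b * g x := by
  filter_upwards [Lp.coeFn_add (a • f) (b • g), Lp.coeFn_smul a f, Lp.coeFn_smul b g]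
    with x h₁ h₂ h₃
  rw [h₁, Pi.add_apply, h₂, h₃, Pi.smul_apply, Pi.smul_apply, smul_eq_mul, smul_eq_mul]

lemma convex_setOf_nonneg : Convex ℝ {f : α →₁[q] ℝ | 0 ≤ f} := by
  intro f hf g hg a b ha hb _
  rw [mem_ofPred_eq, ← Lp.coeFn_nonneg] at hf hg ⊢
  filter_upwards [ae_coeFn_combo f g a b, hf, hg] with x hx hfx hgx
  rw [hx]
  exact add_nonneg (mul_nonneg ha hfx) (mul_nonneg hb hgx)

lemma ae_klFun_nonneg (hf : 0 ≤ f) : 0 ≤ᵐ[q] fun x => klFun (f x) := by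
  filter_upwards [(Lp.coeFn_nonneg f).2 hf] with x hx using klFun_nonneg hx

lemma entropy_nonneg (hf : 0 ≤ f) : 0 ≤ entropy f := integral_nonneg_of_ae (ae_klFun_nonneg hf)

lemma convex_entropyDomain : Convex ℝ (entropyDomain q) := by
  rintro f ⟨hf, hfi⟩ g ⟨hg, hgi⟩ a b ha hb hab
  have hfg := convex_setOf_nonneg hf hg ha hb hab
  refine ⟨hfg, ((hfi.const_mul a).add (hgi.const_mul b)).mono'
    (continuous_klFun.comp_aestronglyMeasurable (Lp.aestronglyMeasurable _)) ?_⟩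
  filter_upwards [ae_coeFn_combo f g a b, (Lp.coeFn_nonneg f).2 hf, (Lp.coeFn_nonneg g).2 hg,
    ae_klFun_nonneg hfg] with x hx hfx hgx hkl
  rw [norm_of_nonneg hkl, hx]
  exact convexOn_klFun.2 hfx hgx ha hb hab

lemma norm_eq_integral_of_nonneg (hf : 0 ≤ f) : ‖f‖ = ∫ x, f x ∂q := by
  rw [L1.norm_eq_integral_norm]
  refine integral_congr_ae ?_
  filter_upwards [(Lp.coeFn_nonneg f).2 hf] with x hx using norm_of_nonneg hx

lemma norm_sub_eq_integral_abs (f g : α →₁[q] ℝ) : ‖f - g‖ = ∫ x, |f x - g x| ∂q := by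
  rw [← dist_eq_norm, L1.dist_eq_integral_dist]
  rfl

lemma mul_norm_sub_le_entropy_gap (hf : f ∈ entropyDomain q) (hg : g ∈ entropyDomain q)
    (ha : 0 ≤ a) (hb : 0 ≤ b) (hab : a + b = 1) (t : ℝ) :
    a * b * (t * ‖f - g‖) ≤
      a * entropy f + b * entropy g - entropy (a • f + b • g)
        + a * b * (t ^ 2 / 2 * (‖f‖ + ‖g‖)) := by
  have hfi := L1.integrable_coeFn f
  have hgi := L1.integrable_coeFn g
  have hfg := convex_entropyDomain hf hg ha hb hab
  have hconvex : Integrable (fun x => a * klFun (f x) + b * klFun (g x)) q :=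
    (hf.2.const_mul a).add (hg.2.const_mul b)
  have hmass : Integrable (fun x => a * b * (t ^ 2 / 2 * (f x + g x))) q :=
    ((hfi.add hgi).const_mul _).const_mul _
  have hgap : ∀ᵐ x ∂q, a * b * (t * |f x - g x|) ≤
      a * klFun (f x) + b * klFun (g x) - klFun ((a • f + b • g : α →₁[q] ℝ) x)
        + a * b * (t ^ 2 / 2 * (f x + g x)) := by
    filter_upwards [ae_coeFn_combo f g a b, (Lp.coeFn_nonneg f).2 hf.1,
      (Lp.coeFn_nonneg g).2 hg.1] with x hx hfx hgx
    rw [hx]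
    exact mul_abs_sub_le_klFun_gap hfx hgx ha hb hab t
  have hintegral := integral_mono_ae (((hfi.sub hgi).abs.const_mul t).const_mul (a * b))
    ((hconvex.sub hfg.2).add hmass) hgap
  rw [integral_add' (hconvex.sub hfg.2) hmass, integral_sub' hconvex hfg.2,
    integral_add (hf.2.const_mul a) (hg.2.const_mul b), integral_const_mul, integral_const_mul,
    integral_const_mul, integral_const_mul, integral_const_mul, integral_const_mul,
    integral_add hfi hgi, ← norm_eq_integral_of_nonneg hf.1,
    ← norm_eq_integral_of_nonneg hg.1] at hintegral
  rw [norm_sub_eq_integral_abs]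
  exact hintegral

theorem strongConvexOn_entropy {R : ℝ} (hR : 0 < R) :
    StrongConvexOn (entropyDomain q ∩ Metric.closedBall 0 R) (1 / (2 * R)) entropy := by
  refine ⟨convex_entropyDomain.inter (convex_closedBall _ _), ?_⟩
  rintro f ⟨hf, hfR⟩ g ⟨hg, hgR⟩ a b ha hb hab
  rw [mem_closedBall_zero_iff] at hfR hgR
  set t := ‖f - g‖ / (2 * R) with ht
  have hnorm : ‖f - g‖ = 2 * R * t := by rw [ht, mul_div_cancel₀ _ (by positivity)]
  have hgap := mul_norm_sub_le_entropy_gap hf hg ha hb hab t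
  have hmass : a * b * (t ^ 2 / 2 * (‖f‖ + ‖g‖)) ≤ a * b * (t ^ 2 * R) := by
    refine mul_le_mul_of_nonneg_left ?_ (mul_nonneg ha hb)
    linarith [mul_le_mul_of_nonneg_left (add_le_add hfR hgR) (sq_nonneg t)]
  have hmodulus : 1 / (2 * R) / 2 * ‖f - g‖ ^ 2 = t ^ 2 * R := by
    rw [hnorm]
    field_simp
  rw [hnorm] at hgap
  simp only [smul_eq_mul, hmodulus]
  linarith

lemma integrable_and_entropy_le_iff (hf : 0 ≤ f) {r : ℝ} (hr : 0 ≤ r) :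
    (Integrable (fun x => klFun (f x)) q ∧ entropy f ≤ r) ↔
      ∫⁻ x, ENNReal.ofReal (klFun (f x)) ∂q ≤ ENNReal.ofReal r := by
  have hmeas : AEStronglyMeasurable (fun x => klFun (f x)) q :=
    continuous_klFun.comp_aestronglyMeasurable (Lp.aestronglyMeasurable f)
  have hreal (hfi : Integrable (fun x => klFun (f x)) q) :
      entropy f ≤ r ↔ ∫⁻ x, ENNReal.ofReal (klFun (f x)) ∂q ≤ ENNReal.ofReal r := by
    rw [← ofReal_integral_eq_lintegral_ofReal hfi (ae_klFun_nonneg hf),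
      ENNReal.ofReal_le_ofReal_iff hr, entropy]
  refine ⟨fun h => (hreal h.1).1 h.2, fun h => ?_⟩
  have hfi : Integrable (fun x => klFun (f x)) q :=
    ⟨hmeas, (hasFiniteIntegral_iff_ofReal (ae_klFun_nonneg hf)).2
      (h.trans_lt ENNReal.ofReal_lt_top)⟩
  exact ⟨hfi, (hreal hfi).2 h⟩

lemma isClosed_entropy_sublevel (r : ℝ) : IsClosed {f ∈ entropyDomain q | entropy f ≤ r} := by
  rcases lt_or_ge r 0 with hr | hr
  · convert isClosed_empty
    exact eq_empty_of_forall_notMem fun f hf => (hf.2.trans_lt hr).not_ge (entropy_nonneg hf.1.1)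
  have hset : {f ∈ entropyDomain q | entropy f ≤ r} =
      Ici 0 ∩ {f | ∫⁻ x, ENNReal.ofReal (klFun (f x)) ∂q ≤ ENNReal.ofReal r} := by
    ext f
    simp only [entropyDomain, mem_ofPred_eq, mem_inter_iff, mem_Ici, and_assoc]
    exact and_congr_right fun hf => integrable_and_entropy_le_iff hf hr
  rw [hset]
  exact isClosed_Ici.inter
    (isClosed_setOf_lintegral_le (ENNReal.continuous_ofReal.comp continuous_klFun) _)

end Entropy

section Density

variable {α β : Type*} [MeasurableSpace α] [MeasurableSpace β] {q : Measure α} {f : α →₁[q] ℝ}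
  {h : α → ℝ}

/-- The functional `f ↦ ∫ f * h` on `L¹` given by an essentially bounded function `h`. -/
def integralMulCLM (hh : MemLp h ∞ q) : (α →₁[q] ℝ) →L[ℝ] ℝ :=
  ((ContinuousLinearMap.mul ℝ ℝ).lpPairing q 1 ∞).flip (hh.toLp h)

lemma integralMulCLM_apply (hh : MemLp h ∞ q) (f : α →₁[q] ℝ) :
    integralMulCLM hh f = ∫ x, f x * h x ∂q := by
  rw [integralMulCLM, ContinuousLinearMap.flip_apply, ContinuousLinearMap.lpPairing_eq_integral]
  refine integral_congr_ae ?_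
  filter_upwards [hh.coeFn_toLp] with x hx
  rw [hx, ContinuousLinearMap.mul_apply']

/-- The measure with density `f` with respect to `q`; negative values of `f` are truncated to
zero. -/
def densityMeasure (f : α →₁[q] ℝ) : Measure α := q.withDensity fun x => ENNReal.ofReal (f x)

instance (f : α →₁[q] ℝ) : IsFiniteMeasure (densityMeasure f) :=
  isFiniteMeasure_withDensity_ofReal (L1.integrable_coeFn f).2

lemma measurable_ofReal_coeFn (f : α →₁[q] ℝ) : Measurable fun x => ENNReal.ofReal (f x) :=
  (Lp.stronglyMeasurable f).measurable.ennreal_ofReal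

lemma integral_densityMeasure (hf : 0 ≤ f) (hh : MemLp h ∞ q) :
    ∫ x, h x ∂(densityMeasure f) = integralMulCLM hh f := by
  rw [densityMeasure, integral_withDensity_eq_integral_toReal_smul (measurable_ofReal_coeFn f)
    (Eventually.of_forall fun x => ENNReal.ofReal_lt_top), integralMulCLM_apply]
  refine integral_congr_ae ?_
  filter_upwards [(Lp.coeFn_nonneg f).2 hf] with x hx
  rw [ENNReal.toReal_ofReal hx, smul_eq_mul]

lemma real_densityMeasure (hf : 0 ≤ f) {A : Set α} (hA : MeasurableSet A) :
    (densityMeasure f).real A = integralMulCLM ((memLp_top_const 1).indicator hA) f := by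
  rw [← integral_densityMeasure hf, integral_indicator_const _ hA, smul_eq_mul, mul_one]

lemma real_densityMeasure_univ (hf : 0 ≤ f) : (densityMeasure f).real univ = ‖f‖ := by
  simp only [real_densityMeasure hf MeasurableSet.univ, integralMulCLM_apply, indicator_univ,
    mul_one, norm_eq_integral_of_nonneg hf]

lemma map_densityMeasure_eq_iff (hf : 0 ≤ f) {T : α → β} (hT : Measurable T) {ν : Measure β}
    [IsFiniteMeasure ν] : (densityMeasure f).map T = ν ↔ ∀ (A : Set β) (hA : MeasurableSet A),
      integralMulCLM ((memLp_top_const 1).indicator (hT hA)) f = ν.real A := by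
  have hreal (A : Set β) (hA : MeasurableSet A) :
      integralMulCLM ((memLp_top_const 1).indicator (hT hA)) f =
        ((densityMeasure f).map T).real A := by
    rw [map_measureReal_apply hT hA, real_densityMeasure hf (hT hA)]
  constructor
  · rintro rfl
    exact hreal
  · intro h
    ext A hA
    exact (measureReal_eq_measureReal_iff).1 ((hreal A hA).symm.trans (h A hA))

lemma setOf_map_densityMeasure_eq {T : α → β} (hT : Measurable T) (ν : Measure β)
    [IsFiniteMeasure ν] :
    {f : α →₁[q] ℝ | 0 ≤ f ∧ (densityMeasure f).map T = ν} =
      {f | 0 ≤ f} ∩ ⋂ (A : Set β) (hA : MeasurableSet A),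
        {f | integralMulCLM ((memLp_top_const 1).indicator (hT hA)) f = ν.real A} := by
  ext f
  simp only [mem_ofPred_eq, mem_inter_iff, mem_iInter]
  exact and_congr_right fun hf => map_densityMeasure_eq_iff hf hT

lemma convex_setOf_map_densityMeasure_eq {T : α → β} (hT : Measurable T) (ν : Measure β)
    [IsFiniteMeasure ν] : Convex ℝ {f : α →₁[q] ℝ | 0 ≤ f ∧ (densityMeasure f).map T = ν} := by
  rw [setOf_map_densityMeasure_eq hT ν]
  exact convex_setOf_nonneg.inter <| convex_iInter₂ fun A hA =>
    convex_hyperplane (integralMulCLM _).isLinear _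

lemma isClosed_setOf_map_densityMeasure_eq {T : α → β} (hT : Measurable T) (ν : Measure β)
    [IsFiniteMeasure ν] : IsClosed {f : α →₁[q] ℝ | 0 ≤ f ∧ (densityMeasure f).map T = ν} := by
  rw [setOf_map_densityMeasure_eq hT ν]
  exact isClosed_Ici.inter <| isClosed_iInter fun A => isClosed_iInter fun hA =>
    isClosed_eq (integralMulCLM _).continuous continuous_const

lemma Ent_densityMeasure [IsFiniteMeasure q] (hf : f ∈ entropyDomain q)
    (hmass : ‖f‖ = q.real univ) : Ent (densityMeasure f) q = (entropy f : EReal) := by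
  have hfi := L1.integrable_coeFn f
  have hlog : (fun x => f x * log (f x)) = fun x => klFun (f x) - 1 + f x := by
    ext x
    rw [klFun_apply]
    ring
  have hdensity : (fun x => ((densityMeasure f).rnDeriv q x).toReal *
      log ((densityMeasure f).rnDeriv q x).toReal) =ᵐ[q] fun x => klFun (f x) - 1 + f x := by
    rw [← hlog]
    filter_upwards [Measure.rnDeriv_withDensity q (measurable_ofReal_coeFn f),
      (Lp.coeFn_nonneg f).2 hf.1] with x hx hfx
    rw [densityMeasure, hx, ENNReal.toReal_ofReal hfx]
  have hint : Integrable (fun x => klFun (f x) - 1) q := hf.2.sub (integrable_const 1)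
  rw [Ent, if_pos ⟨withDensity_absolutelyContinuous _ _, (hint.add hfi).congr hdensity.symm⟩,
    integral_congr_ae hdensity, integral_add hint hfi, integral_sub hf.2 (integrable_const 1),
    ← norm_eq_integral_of_nonneg hf.1, hmass, integral_const, smul_eq_mul, mul_one,
    sub_add_cancel, entropy]

lemma exists_densityMeasure_eq [IsFiniteMeasure q] {ν : Measure α} [IsFiniteMeasure ν]
    (hν : Ent ν q ≠ ⊤) : ∃ f ∈ entropyDomain q, densityMeasure f = ν := by
  obtain ⟨hac, hlog⟩ : ν ≪ q ∧ Integrable (fun x => (ν.rnDeriv q x).toReal *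
      log (ν.rnDeriv q x).toReal) q := by
    by_contra h
    exact hν (if_neg h)
  have hρ : Integrable (fun x => (ν.rnDeriv q x).toReal) q := Measure.integrable_toReal_rnDeriv
  have hf := hρ.coeFn_toL1
  refine ⟨hρ.toL1 _, ⟨?_, ?_⟩, ?_⟩
  · rw [← Lp.coeFn_nonneg]
    filter_upwards [hf] with x hx
    rw [hx]
    exact ENNReal.toReal_nonneg
  · refine ((hlog.add (integrable_const 1)).sub hρ).congr ?_
    filter_upwards [hf] with x hx
    rw [hx, klFun_apply]
    rfl
  · refine (withDensity_congr_ae ?_).trans (Measure.withDensity_rnDeriv_eq ν q hac)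
    filter_upwards [hf, Measure.rnDeriv_lt_top ν q] with x hx hlt
    rw [hx, ENNReal.ofReal_toReal hlt.ne]

end Density

section Coupling

variable {α β : Type*} [MeasurableSpace α] [MeasurableSpace β]

/-- Densities with respect to `μm.prod μp` of the couplings of `μm` and `μp` with finite entropy. -/
def couplingDensities (μm : Measure α) (μp : Measure β) : Set (α × β →₁[μm.prod μp] ℝ) :=
  {f ∈ entropyDomain (μm.prod μp) | (densityMeasure f).fst = μm ∧ (densityMeasure f).snd = μp}

/-- Minimizers of the entropic transport problem with parameter `ε`. -/
def entropicPlans (μm : Measure α) (μp : Measure β) (c : α × β → ℝ) (ε : ℝ) :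
    Set (Measure (α × β)) :=
  {γ | IsProbabilityMeasure γ ∧ γ.fst = μm ∧ γ.snd = μp ∧
    ((∫ p, c p ∂γ : ℝ) : EReal) + (ε : EReal) * Ent γ (μm.prod μp) = entCost μm μp c ε}

/-- The set `Opt(μm, μp)` of optimal transport plans for the cost `c`. -/
def optimalPlans (μm : Measure α) (μp : Measure β) (c : α × β → ℝ) : Set (Measure (α × β)) :=
  {γ | IsProbabilityMeasure γ ∧ γ.fst = μm ∧ γ.snd = μp ∧
    ((∫ p, c p ∂γ : ℝ) : EReal) = entCost μm μp c 0}

/-- Optimal transport plans of least entropy, the candidates for the limit `γ*`. -/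
def leastEntropyPlans (μm : Measure α) (μp : Measure β) (c : α × β → ℝ) :
    Set (Measure (α × β)) :=
  {γ | γ ∈ optimalPlans μm μp c ∧
    ∀ γ' ∈ optimalPlans μm μp c, Ent γ (μm.prod μp) ≤ Ent γ' (μm.prod μp)}

variable {μm : Measure α} {μp : Measure β} {c : α × β → ℝ} {ε : ℝ}
  {ν : Measure (α × β)} {f f₀ : α × β →₁[μm.prod μp] ℝ}

lemma entropicPlans_zero : entropicPlans μm μp c 0 = optimalPlans μm μp c := by
  simp only [entropicPlans, optimalPlans, EReal.coe_zero, zero_mul, add_zero]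

lemma isProbabilityMeasure_of_fst_eq [IsProbabilityMeasure μm] (hν : ν.fst = μm) :
    IsProbabilityMeasure ν :=
  ⟨by rw [← Measure.fst_univ, hν, measure_univ]⟩

lemma entCost_le [IsProbabilityMeasure μm] (hm : ν.fst = μm) (hp : ν.snd = μp) :
    entCost μm μp c ε ≤ ((∫ p, c p ∂ν : ℝ) : EReal) + (ε : EReal) * Ent ν (μm.prod μp) :=
  sInf_le ⟨ν, isProbabilityMeasure_of_fst_eq hm, hm, hp, rfl⟩

lemma norm_eq_one_of_mem_couplingDensities [IsProbabilityMeasure μm]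
    (hf : f ∈ couplingDensities μm μp) : ‖f‖ = 1 := by
  have := isProbabilityMeasure_of_fst_eq hf.2.1
  rw [← real_densityMeasure_univ hf.1.1, probReal_univ]

variable [IsProbabilityMeasure μm] [IsProbabilityMeasure μp]

lemma convex_couplingDensities : Convex ℝ (couplingDensities μm μp) :=
  fun _ hf _ hg _ _ ha hb hab =>
    ⟨convex_entropyDomain hf.1 hg.1 ha hb hab,
      (convex_setOf_map_densityMeasure_eq measurable_fst μm ⟨hf.1.1, hf.2.1⟩ ⟨hg.1.1, hg.2.1⟩
        ha hb hab).2,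
      (convex_setOf_map_densityMeasure_eq measurable_snd μp ⟨hf.1.1, hf.2.2⟩ ⟨hg.1.1, hg.2.2⟩
        ha hb hab).2⟩

lemma isClosed_couplingDensities_entropy_sublevel (r : ℝ) :
    IsClosed {f ∈ couplingDensities μm μp | entropy f ≤ r} := by
  convert ((isClosed_entropy_sublevel r).inter
    (isClosed_setOf_map_densityMeasure_eq measurable_fst μm)).inter
    (isClosed_setOf_map_densityMeasure_eq measurable_snd μp) using 1
  ext f
  simp only [couplingDensities, entropyDomain, Measure.fst, Measure.snd, mem_ofPred_eq,
    mem_inter_iff]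
  tauto

lemma strongConvexOn_entropy_couplingDensities :
    StrongConvexOn (couplingDensities μm μp) (1 / 2) entropy := by
  have hsub : couplingDensities μm μp ⊆ entropyDomain (μm.prod μp) ∩ Metric.closedBall 0 1 :=
    fun _ hf => ⟨hf.1,
      mem_closedBall_zero_iff.2 (norm_eq_one_of_mem_couplingDensities hf).le⟩
  simpa only [mul_one] using
    strongConvexOn_of_subset (strongConvexOn_entropy one_pos) hsub convex_couplingDensities

lemma Ent_densityMeasure_of_mem (hf : f ∈ couplingDensities μm μp) :
    Ent (densityMeasure f) (μm.prod μp) = (entropy f : EReal) :=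
  Ent_densityMeasure hf.1 (by rw [norm_eq_one_of_mem_couplingDensities hf, probReal_univ])

lemma exists_couplingDensity_eq (hm : ν.fst = μm) (hp : ν.snd = μp)
    (hν : Ent ν (μm.prod μp) ≠ ⊤) : ∃ f ∈ couplingDensities μm μp, densityMeasure f = ν := by
  have := isProbabilityMeasure_of_fst_eq hm
  obtain ⟨f, hf, rfl⟩ := exists_densityMeasure_eq hν
  exact ⟨f, ⟨hf, hm, hp⟩, rfl⟩

lemma entropicCost_densityMeasure (hc : MemLp c ∞ (μm.prod μp))
    (hf : f ∈ couplingDensities μm μp) :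
    ((∫ p, c p ∂(densityMeasure f) : ℝ) : EReal) +
        (ε : EReal) * Ent (densityMeasure f) (μm.prod μp) =
      ((integralMulCLM hc f + ε * entropy f : ℝ) : EReal) := by
  rw [integral_densityMeasure hf.1.1 hc, Ent_densityMeasure_of_mem hf]
  norm_cast

lemma isMinOn_of_mem_entropicPlans (hc : MemLp c ∞ (μm.prod μp))
    (hf : f ∈ couplingDensities μm μp) (hγ : densityMeasure f ∈ entropicPlans μm μp c ε) :
    IsMinOn (fun f => integralMulCLM hc f + ε * entropy f) (couplingDensities μm μp) f := by
  intro g hg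
  have hle := hγ.2.2.2.trans_le (entCost_le hg.2.1 hg.2.2)
  rw [entropicCost_densityMeasure hc hf, entropicCost_densityMeasure hc hg] at hle
  exact EReal.coe_le_coe_iff.1 hle

lemma exists_density_of_mem_entropicPlans (hε : 0 < ε) (hc : MemLp c ∞ (μm.prod μp))
    (hf₀ : f₀ ∈ couplingDensities μm μp) (hν : ν ∈ entropicPlans μm μp c ε) :
    ∃ f ∈ couplingDensities μm μp, densityMeasure f = ν := by
  refine exists_couplingDensity_eq hν.2.1 hν.2.2.1 fun htop => ?_
  have hle := hν.2.2.2.trans_le (entCost_le hf₀.2.1 hf₀.2.2)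
  rw [htop, EReal.coe_mul_top_of_pos hε, EReal.coe_add_top,
    entropicCost_densityMeasure hc hf₀] at hle
  exact EReal.coe_ne_top _ (top_le_iff.1 hle)

lemma densityMeasure_mem_optimalPlans_iff (hc : MemLp c ∞ (μm.prod μp))
    (hf₀ : f₀ ∈ couplingDensities μm μp) (hf₀_opt : densityMeasure f₀ ∈ optimalPlans μm μp c)
    (hf : f ∈ couplingDensities μm μp) :
    densityMeasure f ∈ optimalPlans μm μp c ↔
      IsMinOn (integralMulCLM hc) (couplingDensities μm μp) f := by
  constructor
  · rw [← entropicPlans_zero]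
    intro h
    simpa only [zero_mul, add_zero] using isMinOn_of_mem_entropicPlans hc hf h
  · intro h
    refine ⟨isProbabilityMeasure_of_fst_eq hf.2.1, hf.2.1, hf.2.2, le_antisymm ?_ ?_⟩
    · rw [← hf₀_opt.2.2.2, integral_densityMeasure hf.1.1 hc, integral_densityMeasure hf₀.1.1 hc]
      exact EReal.coe_le_coe_iff.2 (h hf₀)
    · simpa only [EReal.coe_zero, zero_mul, add_zero] using
        entCost_le (c := c) (ε := 0) hf.2.1 hf.2.2

lemma mem_leastEntropyPlans_iff (hc : MemLp c ∞ (μm.prod μp))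
    (hf₀ : f₀ ∈ couplingDensities μm μp) (hf₀_opt : densityMeasure f₀ ∈ optimalPlans μm μp c) :
    ν ∈ leastEntropyPlans μm μp c ↔
      ∃ f ∈ {f ∈ couplingDensities μm μp | IsMinOn (integralMulCLM hc) (couplingDensities μm μp) f},
        IsMinOn entropy
            {f ∈ couplingDensities μm μp | IsMinOn (integralMulCLM hc) (couplingDensities μm μp) f}
            f ∧ densityMeasure f = ν := by
  have hopt {g} := densityMeasure_mem_optimalPlans_iff (f := g) hc hf₀ hf₀_opt
  constructor
  · rintro ⟨hν, hmin⟩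
    have hfin : Ent ν (μm.prod μp) ≠ ⊤ := ne_top_of_le_ne_top
      (by rw [Ent_densityMeasure_of_mem hf₀]; exact EReal.coe_ne_top _) (hmin _ hf₀_opt)
    obtain ⟨f, hf, rfl⟩ := exists_couplingDensity_eq hν.2.1 hν.2.2.1 hfin
    refine ⟨f, ⟨hf, (hopt hf).1 hν⟩, fun g hg => ?_, rfl⟩
    have hle := hmin _ ((hopt hg.1).2 hg.2)
    rwa [Ent_densityMeasure_of_mem hf, Ent_densityMeasure_of_mem hg.1,
      EReal.coe_le_coe_iff] at hle
  · rintro ⟨f, hf, hmin, rfl⟩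
    refine ⟨(hopt hf.1).2 hf.2, fun ν hν => ?_⟩
    by_cases htop : Ent ν (μm.prod μp) = ⊤
    · exact htop ▸ le_top
    obtain ⟨g, hg, rfl⟩ := exists_couplingDensity_eq hν.2.1 hν.2.2.1 htop
    rw [Ent_densityMeasure_of_mem hf.1, Ent_densityMeasure_of_mem hg, EReal.coe_le_coe_iff]
    exact hmin ⟨hg, (hopt hg).1 hν⟩

lemma exists_isRegularizedPath (hc : MemLp c ∞ (μm.prod μp))
    (hf₀ : f₀ ∈ couplingDensities μm μp) {γ : ℝ → Measure (α × β)}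
    (hγ : ∀ ε, 0 < ε → γ ε ∈ entropicPlans μm μp c ε) :
    ∃ F, IsRegularizedPath (couplingDensities μm μp) (integralMulCLM hc) entropy F ∧
      ∀ ε, 0 < ε → densityMeasure (F ε) = γ ε := by
  have hdensity (ε : ℝ) : ∃ f, 0 < ε → f ∈ couplingDensities μm μp ∧ densityMeasure f = γ ε := by
    by_cases hε : 0 < ε
    · obtain ⟨f, hf⟩ := exists_density_of_mem_entropicPlans hε hc hf₀ (hγ ε hε)
      exact ⟨f, fun _ => hf⟩
    · exact ⟨f₀, fun h => absurd h hε⟩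
  choose F hF using hdensity
  refine ⟨F, fun ε hε => ⟨(hF ε hε).1, isMinOn_of_mem_entropicPlans hc (hF ε hε).1 ?_⟩,
    fun ε hε => (hF ε hε).2⟩
  rw [(hF ε hε).2]
  exact hγ ε hε

/-- The convergence is stronger than narrow: it holds against every essentially bounded test
function. Asking for `c ∈ L^∞(ν)` over all couplings `ν`, singular ones included, rules out
transport costs that are `0` only by the junk value of the Bochner integral. -/
theorem entropic_plans_converge_narrowly_general
    (hc : ∀ ν : Measure (α × β), ν.fst = μm → ν.snd = μp → MemLp c ∞ ν)
    (hfinite : ∃ γ₀ ∈ optimalPlans μm μp c, Ent γ₀ (μm.prod μp) ≠ ⊤)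
    {γ : ℝ → Measure (α × β)} (hγ : ∀ ε, 0 < ε → γ ε ∈ entropicPlans μm μp c ε) :
    ∃ γs, γs ∈ leastEntropyPlans μm μp c ∧ (∀ γ' ∈ leastEntropyPlans μm μp c, γ' = γs) ∧
      ∀ h : α × β → ℝ, MemLp h ∞ (μm.prod μp) →
        Tendsto (fun ε => ∫ p, h p ∂(γ ε)) (𝓝[>] 0) (𝓝 (∫ p, h p ∂γs)) := by
  have hcq : MemLp c ∞ (μm.prod μp) := hc _ (Measure.fst_prod ..) (Measure.snd_prod ..)
  obtain ⟨_, hopt, hfin⟩ := hfinite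
  obtain ⟨f₀, hf₀, rfl⟩ := exists_couplingDensity_eq hopt.2.1 hopt.2.2.1 hfin
  obtain ⟨F, hF, hFγ⟩ := exists_isRegularizedPath hcq hf₀ hγ
  have hJ : ConvexOn ℝ (couplingDensities μm μp) (integralMulCLM hcq) :=
    (integralMulCLM hcq).toLinearMap.convexOn convex_couplingDensities
  have hH := strongConvexOn_entropy_couplingDensities (μm := μm) (μp := μp)
  obtain ⟨g, hg, hgmin, hlim⟩ := hF.exists_tendsto_isMinOn hJ
    ((integralMulCLM hcq).continuous.lowerSemicontinuous.lowerSemicontinuousOn _) hH (by norm_num)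
    isClosed_couplingDensities_entropy_sublevel hf₀
    ((densityMeasure_mem_optimalPlans_iff hcq hf₀ hopt hf₀).1 hopt)
  have hleast {ν} := mem_leastEntropyPlans_iff (ν := ν) hcq hf₀ hopt
  refine ⟨densityMeasure g, hleast.2 ⟨g, hg, hgmin, rfl⟩, fun ν hν => ?_, fun h hh => ?_⟩
  · obtain ⟨f, hf, hfmin, rfl⟩ := hleast.1 hν
    rw [eq_of_isMinOn_setOf_isMinOn hJ hH (by norm_num) hf hfmin hg hgmin]
  · rw [integral_densityMeasure hg.1.1.1 hh]
    refine (((integralMulCLM hh).continuous.tendsto g).comp hlim).congr' ?_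
    filter_upwards [self_mem_nhdsWithin] with ε hε
    rw [Function.comp_apply, ← hFγ ε hε, integral_densityMeasure (hF.mem hε).1.1 hh]

end Coupling

section Support

variable {α β : Type*} [TopologicalSpace α] [SecondCountableTopology α] [MeasurableSpace α]
  [TopologicalSpace β] [SecondCountableTopology β] [MeasurableSpace β]

lemma measure_compl_msupport (μ : Measure α) : μ (msupport μ)ᶜ = 0 := by
  refine measure_null_of_locally_null _ fun x hx => ?_
  simp only [msupport, mem_compl_iff, mem_ofPred_eq, not_forall, not_not] at hx
  obtain ⟨U, hU, hxU, hμU⟩ := hx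
  exact ⟨U, mem_nhdsWithin_of_mem_nhds (hU.mem_nhds hxU), hμU⟩

lemma ae_mem_msupport_prod (ν : Measure (α × β)) :
    ∀ᵐ p ∂ν, p ∈ msupport ν.fst ×ˢ msupport ν.snd := by
  have hfst : ∀ᵐ x ∂ν.fst, x ∈ msupport ν.fst := measure_compl_msupport _
  have hsnd : ∀ᵐ y ∂ν.snd, y ∈ msupport ν.snd := measure_compl_msupport _
  filter_upwards [ae_of_ae_map measurable_fst.aemeasurable hfst,
    ae_of_ae_map measurable_snd.aemeasurable hsnd] with p hp₁ hp₂ using ⟨hp₁, hp₂⟩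

lemma memLp_top_of_continuousOn_msupport [OpensMeasurableSpace (α × β)] [T2Space α] [T2Space β]
    {c : α × β → ℝ} {ν : Measure (α × β)} (hfst : IsCompact (msupport ν.fst))
    (hsnd : IsCompact (msupport ν.snd)) (hc : ContinuousOn c (msupport ν.fst ×ˢ msupport ν.snd)) :
    MemLp c ∞ ν := by
  have hS := hfst.prod hsnd
  obtain ⟨M, hM⟩ := hS.exists_bound_of_continuousOn hc
  have hmeas := hc.aestronglyMeasurable (μ := ν) hS.measurableSet
  rw [Measure.restrict_eq_self_of_ae_mem (ae_mem_msupport_prod ν)] at hmeas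
  exact memLp_top_of_bound hmeas M ((ae_mem_msupport_prod ν).mono hM)

end Support

/-- If some optimal transport plan has finite entropy, there is a unique entropy-minimizing
optimal plan `γ*`, and the optimal entropic plans `γ_ε` converge narrowly to `γ*` as
`ε → 0⁺`. -/
theorem entropic_plans_converge_narrowly {d : ℕ}
    (μm μp : Measure (EuclideanSpace ℝ (Fin d)))
    [IsProbabilityMeasure μm] [IsProbabilityMeasure μp]
    (hXm : IsCompact (msupport μm)) (hXp : IsCompact (msupport μp))
    (c : EuclideanSpace ℝ (Fin d) × EuclideanSpace ℝ (Fin d) → ℝ)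
    (hc : ContinuousOn c (msupport μm ×ˢ msupport μp))
    (Opt : Set (Measure (EuclideanSpace ℝ (Fin d) × EuclideanSpace ℝ (Fin d))))
    (hOpt : Opt = {γ | IsProbabilityMeasure γ ∧ γ.fst = μm ∧ γ.snd = μp ∧
      ((∫ p, c p ∂γ : ℝ) : EReal) = entCost μm μp c 0})
    (hfinite : ∃ γ0 ∈ Opt, Ent γ0 (μm.prod μp) ≠ ⊤)
    (γ : ℝ → Measure (EuclideanSpace ℝ (Fin d) × EuclideanSpace ℝ (Fin d)))
    (hγ : ∀ ε : ℝ, 0 < ε → IsProbabilityMeasure (γ ε) ∧ (γ ε).fst = μm ∧ (γ ε).snd = μp ∧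
      ((∫ p, c p ∂(γ ε) : ℝ) : EReal) + (ε : EReal) * Ent (γ ε) (μm.prod μp)
        = entCost μm μp c ε) :
    ∃ γs, (γs ∈ Opt ∧ ∀ γ' ∈ Opt, Ent γs (μm.prod μp) ≤ Ent γ' (μm.prod μp)) ∧
      (∀ γ', (γ' ∈ Opt ∧ ∀ γ'' ∈ Opt, Ent γ' (μm.prod μp) ≤ Ent γ'' (μm.prod μp)) → γ' = γs) ∧
      ∀ f : BoundedContinuousFunction
          (EuclideanSpace ℝ (Fin d) × EuclideanSpace ℝ (Fin d)) ℝ,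
        Tendsto (fun ε : ℝ => ∫ p, f p ∂(γ ε)) (nhdsWithin 0 (Set.Ioi 0))
          (nhds (∫ p, f p ∂γs)) := by
  subst hOpt
  obtain ⟨γs, hleast, hunique, hlim⟩ := entropic_plans_converge_narrowly_general
    (fun ν hm hp => by subst hm hp; exact memLp_top_of_continuousOn_msupport hXm hXp hc) hfinite hγ
  exact ⟨γs, hleast, hunique, fun f => hlim f f.memLp_top⟩
end
end

section
/- Let μ⁻, μ⁺ be probability measures on ℝ^d with compact supports X⁻, X⁺ and let c : X⁻ × X⁺ → ℝ be Lipschitz with constant L with respect to the norm ‖(x,y)‖ = max(|x|,|y|) on ℝ^d × ℝ^d. Then for every ε > 0: v_ε ≤ v_0 + ε·min(H_ε(μ⁻), H_ε(μ⁺)) + L·ε. -/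
open MeasureTheory Real Set Filter Classical
open scoped ENNReal NNReal Topology

noncomputable section

/-- `H_δ(μ)`: infimum over countable Borel coverings of the space by sets of diameter `≤ δ`
of `Σ_n μ(A_n) log(1/μ(A_n))`, with values in `ℝ≥0∞`. -/
def entH {α : Type*} [MeasurableSpace α] [PseudoEMetricSpace α] (δ : ℝ) (μ : Measure α) : ℝ≥0∞ :=
  ⨅ (A : ℕ → Set α) (_ : (∀ n, MeasurableSet (A n)) ∧
      (∀ n, EMetric.diam (A n) ≤ ENNReal.ofReal δ) ∧ (⋃ n, A n) = Set.univ),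
    ∑' n, ENNReal.ofReal (Real.negMulLog ((μ (A n)).toReal))

/-!
By symmetry it is enough to treat `H_ε(μ⁻)`. Take a coupling `γ` of `μ⁻` and `μ⁺` and a covering
`(A i)` of the space by sets of diameter at most `ε`. Attach to each `x` a random label `i` with
`x ∈ A i`, and redraw `(x, y)` independently under the law of `γ` given the label. The marginals do
not change, `x` moves by at most `ε`, so that the cost grows by at most `L ε`, and by Jensen's
inequality the relative entropy of the new coupling is at most the mutual information of `x` and
its label.

As the sets may overlap, the labels must be chosen with care. If `i` is drawn among the sets
containing `x` proportionally to weights `w i` of total mass at most one, then Gibbs' inequality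
bounds the mutual information by `∫ -log W dμ⁻`, where `W x` is the total weight of the sets
containing `x`. Adding the sets one at a time, with an inequality for two overlapping sets at each
step, produces weights for which this integral is at most `∑ i, μ⁻(A i) log (1 / μ⁻(A i))`.

For a countable covering, finitely many sets are kept and the rest of the space is one more cell;
its mass tends to zero, and with it its contributions to the entropy and, the supports being
bounded, to the cost.
-/

section TwoSets

lemma one_sub_mul_log_two_le_negMulLog {a : ℝ} (ha : 1 / 2 ≤ a) (ha1 : a ≤ 1) :
    (1 - a) * Real.log 2 ≤ Real.negMulLog a := by
  have hconc := Real.concaveOn_negMulLog.2 (show (1 / 2 : ℝ) ∈ Set.Ici 0 by norm_num)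
    (show (1 : ℝ) ∈ Set.Ici 0 by norm_num) (show 0 ≤ 2 * (1 - a) by linarith)
    (show 0 ≤ 2 * a - 1 by linarith) (by ring)
  have hcomb : 2 * (1 - a) * (1 / 2) + (2 * a - 1) * 1 = a := by ring
  rw [smul_eq_mul, smul_eq_mul, smul_eq_mul, smul_eq_mul, hcomb, Real.negMulLog_one,
    Real.negMulLog, one_div, Real.log_inv] at hconc
  linarith

lemma negMulLog_le_half_log_two_add {b : ℝ} (hb : 0 < b) (hb2 : b ≤ 1 / 2) :
    Real.negMulLog b ≤ Real.log 2 / 2 + (1 / 2 - b) * -Real.log (1 - b) := by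
  have hlog_sub : (1 / 2 - b) * b ≤ (1 / 2 - b) * -Real.log (1 - b) := by
    have := Real.log_le_sub_one_of_pos (show 0 < 1 - b by linarith)
    exact mul_le_mul_of_nonneg_left (by linarith) (by linarith)
  have hlog_two_mul : (2 * b - (2 * b)⁻¹) / 2 ≤ Real.log (2 * b) := by
    rw [← Real.sinh_log (by positivity), Real.sinh_le_self_iff]
    exact Real.log_nonpos (by positivity) (by linarith)
  rw [Real.log_mul two_ne_zero hb.ne'] at hlog_two_mul
  have hmul := mul_le_mul_of_nonneg_left hlog_two_mul hb.le
  have hexpand : b * ((2 * b - (2 * b)⁻¹) / 2) = b ^ 2 - 1 / 4 := by field_simp; ring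
  have hlog_two : 1 / 2 < Real.log 2 := by linarith [Real.log_two_gt_d9]
  rw [Real.negMulLog]
  nlinarith

lemma negMulLog_le_negMulLog_add {a b : ℝ} (hb : 0 < b) (hba : b ≤ a) (ha : a ≤ 1 / 2) :
    Real.negMulLog b ≤ Real.negMulLog a + (a - b) * -Real.log (1 - b) := by
  have hconc : ConcaveOn ℝ (Set.Ici 0) fun x => Real.negMulLog x + -Real.log (1 - b) * x :=
    Real.concaveOn_negMulLog.add ((concaveOn_id (convex_Ici 0)).smul <|
      neg_nonneg.2 <| Real.log_nonpos (by linarith) (by linarith))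
  have hmin := hconc.ge_on_segment (x := b) (y := 1 / 2) (z := a) hb.le (by simp)
    (segment_eq_Icc (hba.trans ha) ▸ ⟨hba, ha⟩)
  have hends := negMulLog_le_half_log_two_add hb (hba.trans ha)
  have hhalf : Real.negMulLog (1 / 2) = Real.log 2 / 2 := by
    rw [Real.negMulLog, one_div, Real.log_inv]; ring
  rw [min_eq_left (by rw [hhalf]; linarith)] at hmin
  linarith

/- `a` and `b` stand for the masses of two sets that cover a probability space, `s` and `1 - s` for
weights given to these sets. If the first set fills less than half of the space, the weights are
those of the partition into the second set and its complement, and symmetrically; if both fill at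
least half of it, equal weights suffice. -/
lemma exists_mixture_neg_log_le {a b : ℝ} (ha1 : a ≤ 1) (hb1 : b ≤ 1) (hab : 1 ≤ a + b) :
    ∃ s ∈ Set.Icc (0 : ℝ) 1, (s = 0 → b = 1) ∧ (s = 1 → a = 1) ∧
      (1 - b) * -Real.log s + (1 - a) * -Real.log (1 - s) ≤
        Real.negMulLog a + Real.negMulLog b := by
  have ha : 0 ≤ a := by linarith
  have hb : 0 ≤ b := by linarith
  rcases hb1.eq_or_lt with rfl | hb1
  · exact ⟨0, by simp, by simp, by simp, by simpa using Real.negMulLog_nonneg ha ha1⟩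
  rcases ha1.eq_or_lt with rfl | ha1
  · exact ⟨1, by simp, by simp, by simp, by simpa using Real.negMulLog_nonneg hb hb1.le⟩
  rcases lt_or_ge a (1 / 2) with ha2 | ha2
  · refine ⟨1 - b, ⟨by linarith, by linarith⟩, fun h => by linarith, fun h => by linarith, ?_⟩
    have := negMulLog_le_negMulLog_add (a := a) (b := 1 - b) (by linarith) (by linarith) ha2.le
    simp only [Real.negMulLog, sub_sub_cancel] at this ⊢
    linarith
  rcases lt_or_ge b (1 / 2) with hb2 | hb2
  · refine ⟨a, ⟨ha, ha1.le⟩, fun h => by linarith, fun h => by linarith, ?_⟩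
    have := negMulLog_le_negMulLog_add (a := b) (b := 1 - a) (by linarith) (by linarith) hb2.le
    simp only [Real.negMulLog, sub_sub_cancel] at this ⊢
    linarith
  · refine ⟨1 / 2, by norm_num, fun h => by norm_num at h, fun h => by norm_num at h, ?_⟩
    have h_half : -Real.log (1 - 1 / 2) = Real.log 2 := by
      rw [← Real.log_inv]; norm_num
    have h_half' : -Real.log (1 / 2) = Real.log 2 := by
      rw [← Real.log_inv]; norm_num
    rw [h_half, h_half']
    linarith [one_sub_mul_log_two_le_negMulLog ha2 ha1.le,
      one_sub_mul_log_two_le_negMulLog hb2 hb1.le]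

lemma exists_mixture_neg_log_le_scaled {a u m : ℝ} (ham : a ≤ m) (hum : u ≤ m)
    (hm : m ≤ a + u) :
    ∃ s ∈ Set.Icc (0 : ℝ) 1, (s = 0 → u = m) ∧ (s = 1 → a = m) ∧
      (m - u) * -Real.log s + (m - a) * -Real.log (1 - s) ≤
        a * Real.log (m / a) + u * Real.log (m / u) := by
  have ha : 0 ≤ a := by linarith
  rcases (ha.trans ham).eq_or_lt with rfl | hm0
  · obtain rfl : a = 0 := by linarith
    obtain rfl : u = 0 := by linarith
    exact ⟨0, by simp⟩
  obtain ⟨s, hs, hs0, hs1, hle⟩ := exists_mixture_neg_log_le (a := a / m) (b := u / m)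
    ((div_le_one hm0).2 ham) ((div_le_one hm0).2 hum) (by rwa [← add_div, one_le_div hm0])
  refine ⟨s, hs, fun h => (div_eq_one_iff_eq hm0.ne').1 (hs0 h),
    fun h => (div_eq_one_iff_eq hm0.ne').1 (hs1 h), ?_⟩
  have hscale : ∀ t, m * Real.negMulLog (t / m) = t * Real.log (m / t) := fun t => by
    rw [Real.negMulLog, ← inv_div m t, Real.log_inv]; field_simp
  have hmul := mul_le_mul_of_nonneg_left hle hm0.le
  rw [mul_add m (Real.negMulLog _), hscale, hscale] at hmul
  refine le_of_eq_of_le ?_ hmul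
  field_simp

end TwoSets

section CoverWeight

variable {ι α : Type*}

/-- For weights `w` on the members of a finite family of sets, the total weight of the sets
containing `x`. When the sets overlap, it normalises the weights to a random choice of a set
containing `x`, see `coverLabel`. -/
def coverWeight (A : ι → Set α) (w : ι → ℝ) (s : Finset ι) (x : α) : ℝ :=
  ∑ i ∈ s, (A i).indicator (fun _ => w i) x

variable {A : ι → Set α} {w : ι → ℝ}

lemma coverWeight_nonneg (hw : ∀ i, 0 ≤ w i) (s : Finset ι) (x : α) : 0 ≤ coverWeight A w s x :=
  Finset.sum_nonneg fun i _ => Set.indicator_nonneg (fun _ _ => hw i) x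

lemma coverWeight_le_one (hw : ∀ i, 0 ≤ w i) {s : Finset ι} (hsum : ∑ i ∈ s, w i ≤ 1) (x : α) :
    coverWeight A w s x ≤ 1 :=
  (Finset.sum_le_sum fun i _ => Set.indicator_le_self' (fun _ _ => hw i) x).trans hsum

lemma measurable_coverWeight [MeasurableSpace α] (hA : ∀ i, MeasurableSet (A i)) (w : ι → ℝ)
    (s : Finset ι) : Measurable (coverWeight A w s) :=
  Finset.measurable_sum s fun i _ => measurable_const.indicator (hA i)

lemma coverWeight_cons_mixture (A : ι → Set α) (w : ι → ℝ) {s : Finset ι} {k : ι} (hk : k ∉ s)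
    (t : ℝ) : coverWeight A (Function.update ((1 - t) • w) k t) (s.cons k hk) =
      fun x => (1 - t) * coverWeight A w s x + (A k).indicator (fun _ => t) x := by
  funext x
  rw [coverWeight, Finset.sum_cons, Function.update_self, coverWeight, Finset.mul_sum, add_comm]
  refine congrArg (· + _) (Finset.sum_congr rfl fun i hi => ?_)
  rw [Function.update_of_ne (ne_of_mem_of_not_mem hi hk)]
  exact Set.indicator_const_smul_apply (A i) (1 - t) (fun _ => w i) x

variable [MeasurableSpace α] {μ : Measure α}

lemma ae_neg_log_mixture_le {B U : Set α} {g : α → ℝ} {t : ℝ} (ht : t ∈ Set.Icc (0 : ℝ) 1)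
    (ht0 : t = 0 → μ (B \ U) = 0) (ht1 : t = 1 → μ (U \ B) = 0) (hg0 : ∀ x, 0 ≤ g x)
    (hg1 : ∀ x, g x ≤ 1) (hgU : ∀ᵐ x ∂μ, x ∈ U → 0 < g x) :
    ∀ᵐ x ∂μ, x ∈ B ∪ U → 0 < (1 - t) * g x + B.indicator (fun _ => t) x ∧
      -Real.log ((1 - t) * g x + B.indicator (fun _ => t) x) ≤
        (B \ U).indicator (fun _ => -Real.log t) x +
          (U \ B).indicator (fun _ => -Real.log (1 - t)) x +
          U.indicator (fun x => -Real.log (g x)) x := by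
  have hB : ∀ᵐ x ∂μ, x ∈ B \ U → t ≠ 0 := by
    rcases eq_or_ne t 0 with h | h
    · filter_upwards [measure_eq_zero_iff_ae_notMem.1 (ht0 h)] with x hx hxB using absurd hxB hx
    · exact ae_of_all _ fun _ _ => h
  have hU : ∀ᵐ x ∂μ, x ∈ U \ B → t ≠ 1 := by
    rcases eq_or_ne t 1 with h | h
    · filter_upwards [measure_eq_zero_iff_ae_notMem.1 (ht1 h)] with x hx hxU using absurd hxU hx
    · exact ae_of_all _ fun _ _ => h
  filter_upwards [hgU, hB, hU] with x hgx hxB hxU hx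
  have hmul : 0 ≤ (1 - t) * g x := mul_nonneg (sub_nonneg.2 ht.2) (hg0 x)
  by_cases hxb : x ∈ B <;> by_cases hxu : x ∈ U
  · have hle : g x ≤ (1 - t) * g x + t := by nlinarith [mul_nonneg ht.1 (sub_nonneg.2 (hg1 x))]
    simp only [hxb, hxu, Set.indicator_of_mem, Set.indicator_of_notMem, Set.mem_sdiff, not_true,
      and_false, not_false_iff, zero_add]
    exact ⟨(hgx hxu).trans_le hle, neg_le_neg (Real.log_le_log (hgx hxu) hle)⟩
  · have htpos : 0 < t := lt_of_le_of_ne ht.1 (hxB ⟨hxb, hxu⟩).symm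
    have hle : t ≤ (1 - t) * g x + t := le_add_of_nonneg_left hmul
    simp only [hxb, hxu, Set.indicator_of_mem, Set.indicator_of_notMem, Set.mem_sdiff, and_true,
      false_and, not_false_iff, add_zero]
    exact ⟨htpos.trans_le hle, neg_le_neg (Real.log_le_log htpos hle)⟩
  · have htpos : 0 < 1 - t := sub_pos.2 (lt_of_le_of_ne ht.2 (hxU ⟨hxu, hxb⟩))
    simp only [hxb, hxu, Set.indicator_of_mem, Set.indicator_of_notMem, Set.mem_sdiff, false_and,
      and_true, not_false_iff, zero_add, add_zero]
    rw [Real.log_mul htpos.ne' (hgx hxu).ne', neg_add]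
    exact ⟨mul_pos htpos (hgx hxu), le_rfl⟩
  · exact absurd hx (by simp [hxb, hxu])

lemma integral_indicator_union [IsFiniteMeasure μ] {B U : Set α} (hB : MeasurableSet B)
    (hU : MeasurableSet U) (p q : ℝ) {g : α → ℝ} (hg : IntegrableOn g U μ) :
    Integrable (fun x => (B \ U).indicator (fun _ => p) x + (U \ B).indicator (fun _ => q) x +
        U.indicator g x) μ ∧
      ∫ x in B ∪ U, ((B \ U).indicator (fun _ => p) x + (U \ B).indicator (fun _ => q) x +
        U.indicator g x) ∂μ = μ.real (B \ U) * p + μ.real (U \ B) * q + ∫ x in U, g x ∂μ := by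
  have hBI : Integrable (fun x => (B \ U).indicator (fun _ => p) x) μ :=
    (integrable_const p).indicator (hB.diff hU)
  have hUI : Integrable (fun x => (U \ B).indicator (fun _ => q) x) μ :=
    (integrable_const q).indicator (hU.diff hB)
  have hBUI : Integrable (fun x => (B \ U).indicator (fun _ => p) x +
    (U \ B).indicator (fun _ => q) x) μ := hBI.add hUI
  have hgI := (integrable_indicator_iff hU).2 hg
  refine ⟨hBUI.add hgI, ?_⟩
  rw [setIntegral_eq_integral_of_forall_compl_eq_zero fun x hx => ?_,
    integral_add hBUI hgI, integral_add hBI hUI, integral_indicator (hB.diff hU),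
    integral_indicator (hU.diff hB), integral_indicator hU, setIntegral_const,
    setIntegral_const, smul_eq_mul, smul_eq_mul]
  obtain ⟨hxB, hxU⟩ := not_or.1 hx
  simp [hxB, hxU]

lemma setIntegral_neg_log_mixture_le [IsFiniteMeasure μ] {B U : Set α} (hB : MeasurableSet B)
    (hU : MeasurableSet U) {g : α → ℝ} (hg : Measurable g) (hg0 : ∀ x, 0 ≤ g x)
    (hg1 : ∀ x, g x ≤ 1) (hgU : ∀ᵐ x ∂μ, x ∈ U → 0 < g x)
    (hgI : IntegrableOn (fun x => -Real.log (g x)) U μ) {t : ℝ} (ht : t ∈ Set.Icc (0 : ℝ) 1)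
    (ht0 : t = 0 → μ (B \ U) = 0) (ht1 : t = 1 → μ (U \ B) = 0) :
    IntegrableOn (fun x => -Real.log ((1 - t) * g x + B.indicator (fun _ => t) x)) (B ∪ U) μ ∧
      ∫ x in B ∪ U, -Real.log ((1 - t) * g x + B.indicator (fun _ => t) x) ∂μ ≤
        μ.real (B \ U) * -Real.log t + μ.real (U \ B) * -Real.log (1 - t) +
          ∫ x in U, -Real.log (g x) ∂μ := by
  set f : α → ℝ := fun x => (1 - t) * g x + B.indicator (fun _ => t) x
  have hae := (ae_restrict_iff' (hB.union hU)).2 <|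
    ae_neg_log_mixture_le ht ht0 ht1 hg0 hg1 hgU
  have hf1 : ∀ x, f x ≤ 1 := fun x =>
    (add_le_add (mul_le_of_le_one_right (sub_nonneg.2 ht.2) (hg1 x))
      (Set.indicator_le_self' (fun _ _ => ht.1) x)).trans_eq (sub_add_cancel 1 t)
  have hf0 : ∀ᵐ x ∂μ.restrict (B ∪ U), 0 ≤ -Real.log (f x) := by
    filter_upwards [hae] with x hx using neg_nonneg.2 (Real.log_nonpos hx.1.le (hf1 x))
  have hfm : Measurable fun x => -Real.log (f x) :=
    ((hg.const_mul _).add (measurable_const.indicator hB)).log.neg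
  obtain ⟨hbound, hbound_eq⟩ :=
    integral_indicator_union hB hU (-Real.log t) (-Real.log (1 - t)) hgI
  refine ⟨hbound.integrableOn.mono' hfm.aestronglyMeasurable ?_, hbound_eq ▸
    integral_mono_of_nonneg hf0 hbound.integrableOn (hae.mono fun x hx => hx.2)⟩
  filter_upwards [hf0, hae] with x h0 hx using (Real.norm_of_nonneg h0).trans_le hx.2

lemma exists_setIntegral_neg_log_mixture_le [IsFiniteMeasure μ] {B U : Set α}
    (hB : MeasurableSet B) (hU : MeasurableSet U) {g : α → ℝ} (hg : Measurable g)
    (hg0 : ∀ x, 0 ≤ g x) (hg1 : ∀ x, g x ≤ 1) (hgU : ∀ᵐ x ∂μ, x ∈ U → 0 < g x)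
    (hgI : IntegrableOn (fun x => -Real.log (g x)) U μ) :
    ∃ t ∈ Set.Icc (0 : ℝ) 1,
      (∀ᵐ x ∂μ, x ∈ B ∪ U → 0 < (1 - t) * g x + B.indicator (fun _ => t) x) ∧
      IntegrableOn (fun x => -Real.log ((1 - t) * g x + B.indicator (fun _ => t) x)) (B ∪ U) μ ∧
      ∫ x in B ∪ U, -Real.log ((1 - t) * g x + B.indicator (fun _ => t) x) ∂μ ≤
        μ.real B * Real.log (μ.real (B ∪ U) / μ.real B) +
          μ.real U * Real.log (μ.real (B ∪ U) / μ.real U) + ∫ x in U, -Real.log (g x) ∂μ := by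
  obtain ⟨t, ht, ht0, ht1, hle⟩ := exists_mixture_neg_log_le_scaled (a := μ.real B)
    (u := μ.real U) (measureReal_mono Set.subset_union_left)
    (measureReal_mono Set.subset_union_right)
    (measureReal_union_le B U)
  have hBU : μ.real (B \ U) = μ.real (B ∪ U) - μ.real U := by
    rw [← Set.union_sdiff_right, measureReal_sdiff Set.subset_union_right hU]
  have hUB : μ.real (U \ B) = μ.real (B ∪ U) - μ.real B := by
    rw [← Set.union_sdiff_left, measureReal_sdiff Set.subset_union_left hB]
  have ht0' : t = 0 → μ (B \ U) = 0 := fun h => by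
    rw [← measureReal_eq_zero_iff, hBU, ht0 h, sub_self]
  have ht1' : t = 1 → μ (U \ B) = 0 := fun h => by
    rw [← measureReal_eq_zero_iff, hUB, ht1 h, sub_self]
  have hmix := setIntegral_neg_log_mixture_le hB hU hg hg0 hg1 hgU hgI ht ht0' ht1'
  refine ⟨t, ht, ?_, hmix.1, hmix.2.trans (by rw [hBU, hUB]; gcongr)⟩
  filter_upwards [ae_neg_log_mixture_le ht ht0' ht1' hg0 hg1 hgU] with x hx hxV using (hx hxV).1

lemma mul_log_div_add_sum_le {s : Finset ι} {a : ι → ℝ} {u m : ℝ} (ha : ∀ i ∈ s, 0 ≤ a i)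
    (hau : ∀ i ∈ s, a i ≤ u) (hu : 0 ≤ u) (hua : u ≤ ∑ i ∈ s, a i) (hum : u ≤ m) :
    u * Real.log (m / u) + ∑ i ∈ s, a i * Real.log (u / a i) ≤
      ∑ i ∈ s, a i * Real.log (m / a i) := by
  rcases hu.eq_or_lt with rfl | hu
  · have ha0 : ∀ i ∈ s, a i = 0 := fun i hi => le_antisymm (hau i hi) (ha i hi)
    rw [zero_mul, zero_add]
    exact (Finset.sum_congr rfl fun i hi => by rw [ha0 i hi, zero_mul, zero_mul]).le
  have hterm : ∀ i ∈ s,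
      a i * Real.log (m / a i) = a i * Real.log (m / u) + a i * Real.log (u / a i) := by
    intro i hi
    rcases (ha i hi).eq_or_lt with h | h
    · rw [← h]; ring
    · rw [← mul_add, ← Real.log_mul (by have := hu.trans_le hum; positivity) (by positivity),
        div_mul_div_cancel₀ hu.ne']
  rw [Finset.sum_congr rfl hterm, Finset.sum_add_distrib, ← Finset.sum_mul]
  gcongr
  exact Real.log_nonneg ((one_le_div hu).2 hum)

/- The next set is adjoined with the weight `t` of `exists_mixture_neg_log_le_scaled`, the previous
weights being scaled by `1 - t`. -/
lemma exists_coverWeight_setIntegral_le [IsFiniteMeasure μ] (hA : ∀ i, MeasurableSet (A i))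
    (s : Finset ι) :
    ∃ w : ι → ℝ, (∀ i, 0 ≤ w i) ∧ ∑ i ∈ s, w i ≤ 1 ∧
      (∀ᵐ x ∂μ, x ∈ ⋃ i ∈ s, A i → 0 < coverWeight A w s x) ∧
      IntegrableOn (fun x => -Real.log (coverWeight A w s x)) (⋃ i ∈ s, A i) μ ∧
      ∫ x in ⋃ i ∈ s, A i, -Real.log (coverWeight A w s x) ∂μ ≤
        ∑ i ∈ s, μ.real (A i) * Real.log (μ.real (⋃ i ∈ s, A i) / μ.real (A i)) := by
  induction s using Finset.cons_induction with
  | empty => exact ⟨0, by simp⟩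
  | cons k s hk ih =>
    obtain ⟨w, hw, hsum, hpos, hint, hle⟩ := ih
    set U := ⋃ i ∈ s, A i with hU
    have hUm : MeasurableSet U := s.measurableSet_biUnion fun i _ => hA i
    have hunion : ⋃ i ∈ s.cons k hk, A i = A k ∪ U := by simp [hU, Set.iUnion_iUnion_eq_or_left]
    obtain ⟨t, ht, hpos', hint', hle'⟩ := exists_setIntegral_neg_log_mixture_le (hA k) hUm
      (measurable_coverWeight hA w s) (coverWeight_nonneg hw s) (coverWeight_le_one hw hsum) hpos
      hint
    refine ⟨Function.update ((1 - t) • w) k t, fun i => ?_, ?_, ?_⟩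
    · rcases eq_or_ne i k with rfl | hi
      · simpa using ht.1
      · simpa [hi] using mul_nonneg (sub_nonneg.2 ht.2) (hw i)
    · rw [Finset.sum_cons, Function.update_self, Finset.sum_update_of_notMem hk]
      simp only [Pi.smul_apply, smul_eq_mul, ← Finset.mul_sum]
      nlinarith [mul_le_mul_of_nonneg_left hsum (sub_nonneg.2 ht.2)]
    simp only [coverWeight_cons_mixture, hunion]
    refine ⟨hpos', hint', hle'.trans ?_⟩
    have hrec := mul_log_div_add_sum_le (s := s) (a := fun i => μ.real (A i)) (u := μ.real U)
      (fun _ _ => measureReal_nonneg)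
      (fun i hi => measureReal_mono (Set.subset_biUnion_of_mem hi) (measure_ne_top μ U))
      measureReal_nonneg (measureReal_biUnion_finset_le s A)
      (measureReal_mono (Set.subset_union_right (s := A k)))
    rw [Finset.sum_cons]
    linarith

end CoverWeight

section WithDensity

variable {ι α β : Type*} [MeasurableSpace α] [MeasurableSpace β]

lemma fst_finsetSum (s : Finset ι) (G : ι → Measure (α × β)) :
    (∑ i ∈ s, G i).fst = ∑ i ∈ s, (G i).fst :=
  Measure.map_finset_sum measurable_fst.aemeasurable

lemma snd_finsetSum (s : Finset ι) (G : ι → Measure (α × β)) :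
    (∑ i ∈ s, G i).snd = ∑ i ∈ s, (G i).snd :=
  Measure.map_finset_sum measurable_snd.aemeasurable

lemma sum_withDensity_ofReal (s : Finset ι) (μ : Measure α) {f : ι → α → ℝ}
    (hf : ∀ i, Measurable (f i)) (h0 : ∀ i x, 0 ≤ f i x) :
    ∑ i ∈ s, μ.withDensity (fun x => ENNReal.ofReal (f i x)) =
      μ.withDensity fun x => ENNReal.ofReal (∑ i ∈ s, f i x) := by
  ext t ht
  simp only [Measure.finsetSum_apply, withDensity_apply _ ht,
    ENNReal.ofReal_sum_of_nonneg fun i _ => h0 i _]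
  rw [lintegral_finsetSum _ fun i _ => (hf i).ennreal_ofReal]

lemma integrable_of_isFiniteMeasure_withDensity_ofReal {μ : Measure α} {f : α → ℝ}
    (hf : Measurable f) (h0 : ∀ x, 0 ≤ f x)
    [IsFiniteMeasure (μ.withDensity fun x => ENNReal.ofReal (f x))] : Integrable f μ := by
  refine ⟨hf.aestronglyMeasurable, (hasFiniteIntegral_iff_ofReal (ae_of_all _ h0)).2 ?_⟩
  rw [← setLIntegral_univ, ← withDensity_apply _ MeasurableSet.univ]
  exact measure_lt_top _ _

lemma withDensity_ofReal_toReal_rnDeriv {μ ν : Measure α} [SigmaFinite μ] [SigmaFinite ν]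
    (h : ν ≪ μ) : μ.withDensity (fun x => ENNReal.ofReal (ν.rnDeriv μ x).toReal) = ν := by
  conv_rhs => rw [← Measure.withDensity_rnDeriv_eq _ _ h]
  refine withDensity_congr_ae ?_
  filter_upwards [ν.rnDeriv_lt_top μ] with x hx using ENNReal.ofReal_toReal hx.ne

lemma absolutelyContinuous_finsetSum {s : Finset ι} (N : ι → Measure α) {i : ι} (hi : i ∈ s) :
    N i ≪ ∑ j ∈ s, N j := by
  refine Measure.absolutelyContinuous_of_le (Measure.le_intro fun t _ _ => ?_)
  rw [Measure.finsetSum_apply]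
  exact Finset.single_le_sum (f := fun j => N j t) (fun _ _ => zero_le) hi

lemma ae_sum_toReal_rnDeriv_eq_one {s : Finset ι} {ν : Measure α} [SigmaFinite ν]
    {N : ι → Measure α} [∀ i, SigmaFinite (N i)] (hsum : ∑ i ∈ s, N i = ν) :
    ∀ᵐ y ∂ν, ∑ i ∈ s, ((N i).rnDeriv ν y).toReal = 1 := by
  have hm : ∀ i, Measurable fun y => ((N i).rnDeriv ν y).toReal := fun i =>
    (Measure.measurable_rnDeriv _ _).ennreal_toReal
  have hdensity : ν.withDensity (fun y => ENNReal.ofReal (∑ i ∈ s, ((N i).rnDeriv ν y).toReal)) =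
      ν.withDensity 1 := by
    rw [← sum_withDensity_ofReal s ν hm fun _ _ => ENNReal.toReal_nonneg, withDensity_one]
    conv_rhs => rw [← hsum]
    exact Finset.sum_congr rfl fun i hi =>
      withDensity_ofReal_toReal_rnDeriv (hsum ▸ absolutelyContinuous_finsetSum N hi)
  filter_upwards [((withDensity_eq_iff_of_sigmaFinite
    (Finset.measurable_fun_sum s fun i _ => hm i).ennreal_ofReal.aemeasurable
    aemeasurable_one).1 hdensity)] with y hy
  exact ENNReal.ofReal_eq_one.1 hy

lemma fst_withDensity_comp_fst (γ : Measure (α × β)) {f : α → ℝ≥0∞} (hf : Measurable f) :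
    (γ.withDensity fun z => f z.1).fst = γ.fst.withDensity f := by
  ext s hs
  rw [Measure.fst_apply hs, withDensity_apply _ (measurable_fst hs), withDensity_apply _ hs,
    Measure.fst, setLIntegral_map hs hf measurable_fst]

lemma ent_withDensity_ofReal (q : Measure α) [SigmaFinite q] {ρ : α → ℝ} (hρ : Measurable ρ)
    (h0 : 0 ≤ᵐ[q] ρ) (hint : Integrable (fun x => ρ x * Real.log (ρ x)) q) :
    Ent (q.withDensity fun x => ENNReal.ofReal (ρ x)) q = (∫ x, ρ x * Real.log (ρ x) ∂q : ℝ) := by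
  have hdensity : (fun x => ((q.withDensity fun x => ENNReal.ofReal (ρ x)).rnDeriv q x).toReal *
      Real.log ((q.withDensity fun x => ENNReal.ofReal (ρ x)).rnDeriv q x).toReal) =ᵐ[q]
      fun x => ρ x * Real.log (ρ x) := by
    filter_upwards [Measure.rnDeriv_withDensity q hρ.ennreal_ofReal, h0] with x hx h0x
    rw [hx, ENNReal.toReal_ofReal h0x]
  rw [Ent, if_pos ⟨withDensity_absolutelyContinuous _ _, hint.congr hdensity.symm⟩,
    integral_congr_ae hdensity]

end WithDensity

section BlockProd

variable {ι α β : Type*} [Fintype ι] [MeasurableSpace α] [MeasurableSpace β]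

/-- Given a decomposition `∑ i, G i` of a measure on a product, the measure in which each block
`G i` is replaced by the product of its marginals, normalised to the same mass. This is the block
approximation of the coupling `∑ i, G i`. -/
def blockProd (G : ι → Measure (α × β)) : Measure (α × β) :=
  ∑ i, (G i Set.univ)⁻¹ • (G i).fst.prod (G i).snd

section Block

variable (G : Measure (α × β)) [IsFiniteMeasure G]

lemma fst_inv_smul_prod : ((G Set.univ)⁻¹ • G.fst.prod G.snd).fst = G.fst := by
  rcases eq_zero_or_neZero G with rfl | hG
  · simp
  rw [Measure.fst, Measure.map_smul, Measure.map_fst_prod, Measure.snd_univ, smul_smul,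
    ENNReal.inv_mul_cancel (by simpa using hG.out) (measure_ne_top G _), one_smul]

lemma snd_inv_smul_prod : ((G Set.univ)⁻¹ • G.fst.prod G.snd).snd = G.snd := by
  rcases eq_zero_or_neZero G with rfl | hG
  · simp
  rw [Measure.snd, Measure.map_smul, Measure.map_snd_prod, Measure.fst_univ, smul_smul,
    ENNReal.inv_mul_cancel (by simpa using hG.out) (measure_ne_top G _), one_smul]

instance isFiniteMeasure_inv_smul_prod :
    IsFiniteMeasure ((G Set.univ)⁻¹ • G.fst.prod G.snd) :=
  ⟨by rw [← Measure.fst_univ, fst_inv_smul_prod]; exact measure_lt_top _ _⟩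

lemma integral_inv_smul_prod_le {c : α × β → ℝ} (hc : Measurable c) {C : ℝ}
    (hcC : ∀ z, |c z| ≤ C) {X : Set α} (hX : ∀ᵐ x ∂G.fst, x ∈ X) {e : ℝ}
    (he : ∀ x ∈ X, ∀ x' ∈ X, ∀ y, c (x, y) ≤ c (x', y) + e) :
    ∫ z, c z ∂((G Set.univ)⁻¹ • G.fst.prod G.snd) ≤ ∫ z, c z ∂G + G.real Set.univ * e := by
  rcases eq_zero_or_neZero G with rfl | hG
  · simp
  have hm : Measurable (Prod.map id Prod.snd : α × α × β → α × β) :=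
    measurable_id.prodMap measurable_snd
  have hprod : G.fst.prod G.snd = (G.fst.prod G).map (Prod.map id Prod.snd) := by
    rw [← Measure.map_prod_map _ _ measurable_id measurable_snd, Measure.map_id, Measure.snd]
  have hcI : Integrable c G := .of_bound hc.aestronglyMeasurable C (ae_of_all _ hcC)
  have hswap : ∫ z, c z ∂G.fst.prod G.snd ≤ ∫ z, c z.2 + e ∂G.fst.prod G := by
    rw [hprod, integral_map hm.aemeasurable hc.aestronglyMeasurable]
    refine integral_mono_ae
      (.of_bound (hc.comp hm).aestronglyMeasurable C (ae_of_all _ fun z => hcC _))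
      ((hcI.comp_snd G.fst).add (integrable_const e)) ?_
    filter_upwards [Measure.quasiMeasurePreserving_fst.ae hX,
      Measure.quasiMeasurePreserving_snd.ae (ae_of_ae_map measurable_fst.aemeasurable hX)]
      with z hz hz' using he z.1 hz z.2.1 hz' z.2.2
  have hmass : 0 < G.real Set.univ := measureReal_univ_pos
  rw [integral_fun_snd (fun z => c z + e), integral_add hcI (integrable_const e),
    integral_const, measureReal_def, Measure.fst_univ, ← measureReal_def, smul_eq_mul,
    smul_eq_mul] at hswap
  rw [integral_smul_measure, ENNReal.toReal_inv, ← measureReal_def, smul_eq_mul]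
  exact (inv_mul_le_iff₀ hmass).2 hswap

lemma inv_smul_prod_eq_withDensity {μ : Measure α} {ν : Measure β} [SigmaFinite μ] [SigmaFinite ν]
    {f : α → ℝ} {h : β → ℝ} (hf : Measurable f) (hh : Measurable h) (hf0 : ∀ x, 0 ≤ f x)
    (hfst : G.fst = μ.withDensity fun x => ENNReal.ofReal (f x))
    (hsnd : G.snd = ν.withDensity fun y => ENNReal.ofReal (h y)) :
    (G Set.univ)⁻¹ • G.fst.prod G.snd =
      (μ.prod ν).withDensity fun z => ENNReal.ofReal (h z.2 * (f z.1 / G.real Set.univ)) := by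
  rcases eq_zero_or_neZero G with rfl | hG
  · simp
  have hmass : 0 < G.real Set.univ := measureReal_univ_pos
  have hm : Measurable fun z : α × β => ENNReal.ofReal (f z.1) * ENNReal.ofReal (h z.2) := by
    fun_prop
  rw [hfst, hsnd, prod_withDensity hf.ennreal_ofReal hh.ennreal_ofReal, ← withDensity_smul _ hm]
  congr with z
  rw [Pi.smul_apply, smul_eq_mul, mul_comm (h _), div_mul_eq_mul_div,
    ENNReal.ofReal_div_of_pos hmass, ENNReal.ofReal_mul (hf0 _), ofReal_measureReal,
    ENNReal.div_eq_inv_mul]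

end Block

variable (G : ι → Measure (α × β)) [∀ i, IsFiniteMeasure (G i)]

lemma fst_blockProd : (blockProd G).fst = (∑ i, G i).fst := by
  rw [blockProd, fst_finsetSum, fst_finsetSum]
  exact Finset.sum_congr rfl fun i _ => fst_inv_smul_prod (G i)

lemma snd_blockProd : (blockProd G).snd = (∑ i, G i).snd := by
  rw [blockProd, snd_finsetSum, snd_finsetSum]
  exact Finset.sum_congr rfl fun i _ => snd_inv_smul_prod (G i)

lemma integral_blockProd_le {c : α × β → ℝ} (hc : Measurable c) {C : ℝ} (hcC : ∀ z, |c z| ≤ C)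
    {X : ι → Set α} (hX : ∀ i, ∀ᵐ x ∂(G i).fst, x ∈ X i) {e : ι → ℝ}
    (he : ∀ i, ∀ x ∈ X i, ∀ x' ∈ X i, ∀ y, c (x, y) ≤ c (x', y) + e i) :
    ∫ z, c z ∂blockProd G ≤ ∫ z, c z ∂(∑ i, G i) + ∑ i, (G i).real Set.univ * e i := by
  have hint : ∀ γ : Measure (α × β), IsFiniteMeasure γ → Integrable c γ := fun γ _ =>
    .of_bound hc.aestronglyMeasurable C (ae_of_all _ hcC)
  rw [blockProd, integral_finsetSum_measure fun i _ => hint _ inferInstance,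
    integral_finsetSum_measure fun i _ => hint _ inferInstance, ← Finset.sum_add_distrib]
  exact Finset.sum_le_sum fun i _ => integral_inv_smul_prod_le (G i) hc hcC (hX i) (he i)

lemma blockProd_eq_withDensity {μ : Measure α} {ν : Measure β} [SigmaFinite μ] [SigmaFinite ν]
    {f : ι → α → ℝ} {h : ι → β → ℝ} (hf : ∀ i, Measurable (f i))
    (hh : ∀ i, Measurable (h i)) (f0 : ∀ i x, 0 ≤ f i x) (h0 : ∀ i y, 0 ≤ h i y)
    (hfst : ∀ i, (G i).fst = μ.withDensity fun x => ENNReal.ofReal (f i x))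
    (hsnd : ∀ i, (G i).snd = ν.withDensity fun y => ENNReal.ofReal (h i y)) :
    blockProd G = (μ.prod ν).withDensity fun z => ENNReal.ofReal
      (∑ i, h i z.2 * (f i z.1 / (G i).real Set.univ)) := by
  have hm : ∀ i, Measurable fun z : α × β =>
      h i z.2 * (f i z.1 / (G i).real Set.univ) := fun i => by fun_prop
  rw [← sum_withDensity_ofReal _ _ hm fun i z =>
    mul_nonneg (h0 i _) (div_nonneg (f0 i _) measureReal_nonneg)]
  exact Finset.sum_congr rfl fun i _ =>
    inv_smul_prod_eq_withDensity (G i) (hf i) (hh i) (f0 i) (hfst i) (hsnd i)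

section Entropy

variable {μ : Measure α} {ν : Measure β} [IsFiniteMeasure μ] [IsFiniteMeasure ν]
  {f : ι → α → ℝ} {h : ι → β → ℝ}

lemma mul_log_sum_le {h f : ι → ℝ} (h0 : ∀ i, 0 ≤ h i) (hsum : ∑ i, h i = 1)
    (f0 : ∀ i, 0 ≤ f i) :
    (∑ i, h i * f i) * Real.log (∑ i, h i * f i) ≤ ∑ i, h i * (f i * Real.log (f i)) := by
  simpa only [smul_eq_mul] using
    Real.convexOn_mul_log.map_sum_le (fun i _ => h0 i) hsum fun i _ => Set.mem_Ici.2 (f0 i)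

lemma integrable_mul_log_mixture_and_integral_le (hf : ∀ i, Measurable (f i))
    (hh : ∀ i, Measurable (h i)) (f0 : ∀ i x, 0 ≤ f i x) (h0 : ∀ i y, 0 ≤ h i y)
    (hsum : ∀ᵐ y ∂ν, ∑ i, h i y = 1) (hfI : ∀ i, Integrable (f i) μ) (hhI : ∀ i, Integrable (h i) ν)
    (hflog : ∀ i, Integrable (fun x => f i x * Real.log (f i x)) μ) :
    Integrable (fun z => (∑ i, h i z.2 * f i z.1) * Real.log (∑ i, h i z.2 * f i z.1))
      (μ.prod ν) ∧
    ∫ z, (∑ i, h i z.2 * f i z.1) * Real.log (∑ i, h i z.2 * f i z.1) ∂μ.prod ν ≤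
      ∑ i, (∫ y, h i y ∂ν) * ∫ x, f i x * Real.log (f i x) ∂μ := by
  have hint : ∀ i, Integrable (fun z : α × β => h i z.2 * (f i z.1 * Real.log (f i z.1)))
      (μ.prod ν) := fun i => by
    simpa only [mul_comm] using (hflog i).mul_prod (hhI i)
  have hintρ : ∀ i, Integrable (fun z : α × β => h i z.2 * f i z.1) (μ.prod ν) := fun i => by
    simpa only [mul_comm] using (hfI i).mul_prod (hhI i)
  have hjensen : ∀ᵐ z ∂μ.prod ν, (∑ i, h i z.2 * f i z.1) * Real.log (∑ i, h i z.2 * f i z.1) ≤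
      ∑ i, h i z.2 * (f i z.1 * Real.log (f i z.1)) := by
    filter_upwards [Measure.quasiMeasurePreserving_snd.ae hsum] with z hz using
      mul_log_sum_le (fun i => h0 i _) hz fun i => f0 i _
  have hρ : Integrable (fun z => (∑ i, h i z.2 * f i z.1) * Real.log (∑ i, h i z.2 * f i z.1))
      (μ.prod ν) := by
    refine integrable_of_le_of_le (by fun_prop) (ae_of_all _ fun z => ?_) hjensen
      ((integrable_finsetSum Finset.univ fun i _ => hintρ i).sub (integrable_const 1))
      (integrable_finsetSum _ fun i _ => hint i)
    exact Real.self_sub_one_le_mul_log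
      (Finset.sum_nonneg fun i _ => mul_nonneg (h0 i _) (f0 i _))
  refine ⟨hρ, (integral_mono_ae hρ (integrable_finsetSum _ fun i _ => hint i) hjensen).trans_eq ?_⟩
  rw [integral_finsetSum _ fun i _ => hint i]
  refine Finset.sum_congr rfl fun i _ => ?_
  rw [mul_comm, ← integral_prod_mul]
  simp only [mul_comm]

lemma ent_blockProd_le {p : ι → α → ℝ} (hp : ∀ i, Measurable (p i)) (p0 : ∀ i x, 0 ≤ p i x)
    (hfst : ∀ i, (G i).fst = μ.withDensity fun x => ENNReal.ofReal (p i x))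
    (hsnd : ∑ i, (G i).snd = ν)
    (hlog : ∀ i, Integrable (fun x => p i x * Real.log (p i x / (G i).real Set.univ)) μ) :
    Ent (blockProd G) (μ.prod ν) ≤
      (∑ i, ∫ x, p i x * Real.log (p i x / (G i).real Set.univ) ∂μ : ℝ) := by
  have hac : ∀ i, (G i).snd ≪ ν := fun i =>
    hsnd ▸ absolutelyContinuous_finsetSum _ (Finset.mem_univ i)
  have hh : ∀ i, Measurable fun y => ((G i).snd.rnDeriv ν y).toReal := fun i =>
    (Measure.measurable_rnDeriv _ _).ennreal_toReal
  have f0 : ∀ i x, 0 ≤ p i x / (G i).real Set.univ := fun i x =>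
    div_nonneg (p0 i x) measureReal_nonneg
  have hpI : ∀ i, Integrable (p i) μ := fun i => by
    have : IsFiniteMeasure (μ.withDensity fun x => ENNReal.ofReal (p i x)) := hfst i ▸ inferInstance
    exact integrable_of_isFiniteMeasure_withDensity_ofReal (hp i) (p0 i)
  obtain ⟨hint, hle⟩ := integrable_mul_log_mixture_and_integral_le
    (fun i => (hp i).div_const ((G i).real Set.univ)) hh f0 (fun i y => ENNReal.toReal_nonneg)
    (ae_sum_toReal_rnDeriv_eq_one hsnd) (fun i => (hpI i).div_const _)
    (fun i => Measure.integrable_toReal_rnDeriv) fun i => by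
      simpa only [div_mul_eq_mul_div] using (hlog i).div_const ((G i).real Set.univ)
  rw [blockProd_eq_withDensity G hp hh p0 (fun i y => ENNReal.toReal_nonneg) hfst
    fun i => (withDensity_ofReal_toReal_rnDeriv (hac i)).symm,
    ent_withDensity_ofReal _ (by fun_prop)
    (ae_of_all _ fun z => Finset.sum_nonneg fun i _ => mul_nonneg ENNReal.toReal_nonneg (f0 i _))
    hint]
  refine EReal.coe_le_coe_iff.2 (hle.trans (Finset.sum_le_sum fun i _ => ?_))
  rw [Measure.integral_toReal_rnDeriv (hac i), measureReal_def, Measure.snd_univ, ← measureReal_def]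
  simp only [div_mul_eq_mul_div]
  rw [integral_div]
  rcases eq_or_ne ((G i).real Set.univ) 0 with hmass | hmass
  · simp [hmass]
  · rw [mul_div_cancel₀ _ hmass]

end Entropy

end BlockProd

section LabelledPart

variable {ι α β : Type*} [MeasurableSpace α] [MeasurableSpace β]

/-- If each point `(x, y)` drawn from `γ` receives a certain label with probability `p x`, the part
of `γ` that carries this label. -/
def labelledPart (γ : Measure (α × β)) (p : α → ℝ) : Measure (α × β) :=
  γ.withDensity fun z => ENNReal.ofReal (p z.1)

variable {γ : Measure (α × β)} {p : α → ℝ}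

lemma fst_labelledPart (γ : Measure (α × β)) (hp : Measurable p) :
    (labelledPart γ p).fst = γ.fst.withDensity fun x => ENNReal.ofReal (p x) :=
  fst_withDensity_comp_fst γ (f := fun x => ENNReal.ofReal (p x)) hp.ennreal_ofReal

lemma labelledPart_apply_univ (γ : Measure (α × β)) (hp : Measurable p) :
    labelledPart γ p Set.univ = ∫⁻ x, ENNReal.ofReal (p x) ∂γ.fst := by
  rw [← Measure.fst_univ, fst_labelledPart γ hp, withDensity_apply _ MeasurableSet.univ,
    setLIntegral_univ]

lemma isFiniteMeasure_labelledPart (hp : Measurable p) (hpI : Integrable p γ.fst) :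
    IsFiniteMeasure (labelledPart γ p) :=
  ⟨by rw [labelledPart_apply_univ γ hp]; exact hpI.lintegral_lt_top⟩

lemma labelledPart_real_univ (γ : Measure (α × β)) (hp : Measurable p) (p0 : ∀ x, 0 ≤ p x) :
    (labelledPart γ p).real Set.univ = ∫ x, p x ∂γ.fst := by
  rw [measureReal_def, labelledPart_apply_univ γ hp,
    integral_eq_lintegral_of_nonneg_ae (ae_of_all _ p0) hp.aestronglyMeasurable]

lemma ae_fst_labelledPart_mem (hp : Measurable p) {X A : Set α}
    (hX : ∀ᵐ x ∂γ.fst, x ∈ X) (hpA : ∀ x, p x ≠ 0 → x ∈ A) :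
    ∀ᵐ x ∂(labelledPart γ p).fst, x ∈ A ∩ X := by
  rw [fst_labelledPart γ hp, ae_withDensity_iff hp.ennreal_ofReal]
  filter_upwards [hX] with x hx hpx
  exact ⟨hpA x fun h => hpx (by rw [h, ENNReal.ofReal_zero]), hx⟩

lemma sum_labelledPart {s : Finset ι} {p : ι → α → ℝ} (hp : ∀ i, Measurable (p i))
    (p0 : ∀ i x, 0 ≤ p i x) (hsum : ∀ᵐ x ∂γ.fst, ∑ i ∈ s, p i x = 1) :
    ∑ i ∈ s, labelledPart γ (p i) = γ := by
  have hone : (fun z : α × β => ENNReal.ofReal (∑ i ∈ s, p i z.1)) =ᵐ[γ] 1 := by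
    filter_upwards [ae_of_ae_map measurable_fst.aemeasurable hsum] with z hz
    rw [hz, ENNReal.ofReal_one, Pi.one_apply]
  simp only [labelledPart]
  rw [sum_withDensity_ofReal s γ (f := fun i z => p i z.1)
    (fun i => (hp i).comp measurable_fst) fun i _ => p0 i _,
    withDensity_congr_ae hone, withDensity_one]

end LabelledPart

section Coupling

variable {ι α β : Type*} [Fintype ι] [MeasurableSpace α] [MeasurableSpace β]
  {γ : Measure (α × β)} [IsProbabilityMeasure γ] {c : α × β → ℝ} {C ε : ℝ}

lemma integrable_of_sum_eq_one {μ : Measure α} [IsFiniteMeasure μ] {p : ι → α → ℝ}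
    (hp : ∀ i, Measurable (p i)) (p0 : ∀ i x, 0 ≤ p i x) (hsum : ∀ᵐ x ∂μ, ∑ i, p i x = 1) (i : ι) :
    Integrable (p i) μ := by
  refine .of_bound (hp i).aestronglyMeasurable 1 ?_
  filter_upwards [hsum] with x hx
  rw [Real.norm_of_nonneg (p0 i x), ← hx]
  exact Finset.single_le_sum (f := fun i => p i x) (fun i _ => p0 i x) (Finset.mem_univ i)

lemma entCost_le_of_coupling {μ : Measure α} {ν : Measure β} (hfst : γ.fst = μ)
    (hsnd : γ.snd = ν) (hε : 0 ≤ ε) {h : ℝ} (hent : Ent γ (μ.prod ν) ≤ h) :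
    entCost μ ν c ε ≤ (∫ z, c z ∂γ + ε * h : ℝ) := by
  have hle : entCost μ ν c ε ≤ (∫ z, c z ∂γ : ℝ) + (ε : EReal) * Ent γ (μ.prod ν) :=
    sInf_le ⟨γ, inferInstance, hfst, hsnd, rfl⟩
  refine hle.trans ?_
  rw [EReal.coe_add, EReal.coe_mul]
  exact add_le_add le_rfl (mul_le_mul_of_nonneg_left hent (EReal.coe_nonneg.2 hε))

/- The two points are drawn independently once the label is known; the last sum is the mutual
information of the first point and its label. -/
lemma entCost_le_of_labels (hc : Measurable c) (hcC : ∀ z, |c z| ≤ C) (hε : 0 ≤ ε)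
    {p : ι → α → ℝ} (hp : ∀ i, Measurable (p i)) (p0 : ∀ i x, 0 ≤ p i x)
    (hsum : ∀ᵐ x ∂γ.fst, ∑ i, p i x = 1)
    (hlog : ∀ i, Integrable (fun x => p i x * Real.log (p i x / ∫ x, p i x ∂γ.fst)) γ.fst)
    {A : ι → Set α} (hpA : ∀ i x, p i x ≠ 0 → x ∈ A i) {X : Set α} (hX : ∀ᵐ x ∂γ.fst, x ∈ X)
    {e : ι → ℝ} (he : ∀ i, ∀ x ∈ A i ∩ X, ∀ x' ∈ A i ∩ X, ∀ y, c (x, y) ≤ c (x', y) + e i) :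
    entCost γ.fst γ.snd c ε ≤ (∫ z, c z ∂γ + ∑ i, (∫ x, p i x ∂γ.fst) * e i +
      ε * ∑ i, ∫ x, p i x * Real.log (p i x / ∫ x, p i x ∂γ.fst) ∂γ.fst : ℝ) := by
  have hG : ∀ i, IsFiniteMeasure (labelledPart γ (p i)) := fun i =>
    isFiniteMeasure_labelledPart (hp i) (integrable_of_sum_eq_one hp p0 hsum i)
  have hmass : ∀ i, (labelledPart γ (p i)).real Set.univ = ∫ x, p i x ∂γ.fst := fun i =>
    labelledPart_real_univ γ (hp i) (p0 i)
  have hGsum : ∑ i, labelledPart γ (p i) = γ := sum_labelledPart hp p0 hsum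
  have hGsnd : ∑ i, (labelledPart γ (p i)).snd = γ.snd := by
    rw [← snd_finsetSum, hGsum]
  set γ' := blockProd fun i => labelledPart γ (p i) with hγ'
  have hfst' : γ'.fst = γ.fst := by
    rw [hγ', fst_blockProd, hGsum]
  have hsnd' : γ'.snd = γ.snd := by
    rw [hγ', snd_blockProd, hGsum]
  have : IsProbabilityMeasure γ' := ⟨by rw [← Measure.fst_univ, hfst', measure_univ]⟩
  have hent := ent_blockProd_le _ hp p0
    (fun i => fst_labelledPart γ (hp i)) hGsnd (by simpa only [hmass] using hlog)
  have hcost := integral_blockProd_le (fun i => labelledPart γ (p i)) hc hcC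
    (fun i => ae_fst_labelledPart_mem (hp i) hX (hpA i)) he
  simp only [hmass, hGsum] at hent hcost
  refine (entCost_le_of_coupling hfst' hsnd' hε hent).trans (EReal.coe_le_coe_iff.2 ?_)
  exact add_le_add hcost le_rfl

end Coupling

section CoverLabel

variable {ι α : Type*}

/-- The probability of the label `i` at `x` when a label is drawn among the sets `A i`, `i ∈ s`,
that contain `x`, proportionally to the weights `w`. -/
def coverLabel (A : ι → Set α) (w : ι → ℝ) (s : Finset ι) (i : ι) (x : α) : ℝ :=
  (A i).indicator (fun _ => w i) x / coverWeight A w s x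

variable {A : ι → Set α} {w : ι → ℝ} {s : Finset ι} {i : ι} {x : α}

lemma coverLabel_nonneg (hw : ∀ i, 0 ≤ w i) (s : Finset ι) (i : ι) (x : α) :
    0 ≤ coverLabel A w s i x :=
  div_nonneg (Set.indicator_nonneg (fun _ _ => hw i) x) (coverWeight_nonneg hw s x)

lemma coverLabel_le_one (hw : ∀ i, 0 ≤ w i) (hi : i ∈ s) (x : α) : coverLabel A w s i x ≤ 1 :=
  div_le_one_of_le₀ (Finset.single_le_sum (f := fun i => (A i).indicator (fun _ => w i) x)
    (fun i _ => Set.indicator_nonneg (fun _ _ => hw i) x) hi) (coverWeight_nonneg hw s x)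

lemma sum_coverLabel (h : coverWeight A w s x ≠ 0) : ∑ i ∈ s, coverLabel A w s i x = 1 := by
  simp only [coverLabel, ← Finset.sum_div]
  exact div_self h

lemma mem_of_coverLabel_ne_zero (h : coverLabel A w s i x ≠ 0) : x ∈ A i := by
  by_contra hx
  exact h (by rw [coverLabel, Set.indicator_of_notMem hx, zero_div])

lemma coverLabel_mul_log_div (hW : coverWeight A w s x ≠ 0) {q : ℝ} (hq : q ≠ 0) :
    coverLabel A w s i x * Real.log (coverLabel A w s i x / q) =
      coverLabel A w s i x * -Real.log (coverWeight A w s x) +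
        coverLabel A w s i x * Real.log (w i / q) := by
  rcases eq_or_ne (coverLabel A w s i x) 0 with hzero | hne
  · simp [hzero]
  have hlabel : coverLabel A w s i x = w i / coverWeight A w s x := by
    rw [coverLabel, Set.indicator_of_mem (mem_of_coverLabel_ne_zero hne)]
  have hwi : w i ≠ 0 := fun h => hne (by rw [hlabel, h, zero_div])
  rw [hlabel, div_right_comm, Real.log_div (div_ne_zero hwi hq) hW]
  ring

variable [MeasurableSpace α] {μ : Measure α}

lemma measurable_coverLabel (hA : ∀ i, MeasurableSet (A i)) (w : ι → ℝ) (s : Finset ι) (i : ι) :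
    Measurable (coverLabel A w s i) :=
  (measurable_const.indicator (hA i)).div (measurable_coverWeight hA w s)

lemma integrable_coverLabel [IsFiniteMeasure μ] (hA : ∀ i, MeasurableSet (A i))
    (hw : ∀ i, 0 ≤ w i) (hi : i ∈ s) : Integrable (coverLabel A w s i) μ := by
  refine .of_bound (measurable_coverLabel hA w s i).aestronglyMeasurable 1 (ae_of_all _ fun x => ?_)
  rw [Real.norm_of_nonneg (coverLabel_nonneg hw s i x)]
  exact coverLabel_le_one hw hi x

lemma integral_coverLabel_le [IsFiniteMeasure μ] (hA : ∀ i, MeasurableSet (A i))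
    (hw : ∀ i, 0 ≤ w i) (hi : i ∈ s) : ∫ x, coverLabel A w s i x ∂μ ≤ μ.real (A i) := by
  rw [← integral_indicator_one (hA i)]
  refine integral_mono (integrable_coverLabel hA hw hi) ((integrable_const 1).indicator (hA i))
    fun x => ?_
  by_cases hx : x ∈ A i
  · rw [Set.indicator_of_mem hx, Pi.one_apply]
    exact coverLabel_le_one hw hi x
  · rw [Set.indicator_of_notMem hx, coverLabel, Set.indicator_of_notMem hx, zero_div]

lemma integrable_coverLabel_mul_neg_log (hA : ∀ i, MeasurableSet (A i))
    (hw : ∀ i, 0 ≤ w i) (hi : i ∈ s)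
    (hlogW : Integrable (fun x => -Real.log (coverWeight A w s x)) μ) :
    Integrable (fun x => coverLabel A w s i x * -Real.log (coverWeight A w s x)) μ := by
  refine hlogW.bdd_mul (c := 1) (measurable_coverLabel hA w s i).aestronglyMeasurable
    (ae_of_all _ fun x => ?_)
  rw [Real.norm_of_nonneg (coverLabel_nonneg hw s i x)]
  exact coverLabel_le_one hw hi x

lemma integrable_coverLabel_mul_log_div [IsFiniteMeasure μ] (hA : ∀ i, MeasurableSet (A i))
    (hw : ∀ i, 0 ≤ w i) (hi : i ∈ s)
    (hW : ∀ᵐ x ∂μ, 0 < coverWeight A w s x)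
    (hlogW : Integrable (fun x => -Real.log (coverWeight A w s x)) μ) (q : ℝ) :
    Integrable (fun x => coverLabel A w s i x * Real.log (coverLabel A w s i x / q)) μ := by
  rcases eq_or_ne q 0 with rfl | hq
  · simp
  refine ((integrable_coverLabel_mul_neg_log hA hw hi hlogW).add
    ((integrable_coverLabel hA hw hi).mul_const (Real.log (w i / q)))).congr ?_
  filter_upwards [hW] with x hx using (coverLabel_mul_log_div hx.ne' hq).symm

lemma integral_coverLabel_mul_log_le [IsFiniteMeasure μ] (hA : ∀ i, MeasurableSet (A i))
    (hw : ∀ i, 0 ≤ w i) (hi : i ∈ s) (hsum : ∑ i ∈ s, w i ≤ 1)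
    (hW : ∀ᵐ x ∂μ, 0 < coverWeight A w s x)
    (hlogW : Integrable (fun x => -Real.log (coverWeight A w s x)) μ) :
    ∫ x, coverLabel A w s i x * Real.log (coverLabel A w s i x / ∫ x, coverLabel A w s i x ∂μ) ∂μ ≤
      ∫ x, coverLabel A w s i x * -Real.log (coverWeight A w s x) ∂μ +
        (w i - ∫ x, coverLabel A w s i x ∂μ) := by
  have hint := integrable_coverLabel_mul_neg_log hA hw hi hlogW
  have hnonneg : 0 ≤ ∫ x, coverLabel A w s i x ∂μ := integral_nonneg (coverLabel_nonneg hw s i)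
  set q := ∫ x, coverLabel A w s i x ∂μ with hq
  rcases hnonneg.eq_or_lt with hzero | hpos
  · simp only [← hzero, div_zero, Real.log_zero, mul_zero, integral_zero, sub_zero]
    refine add_nonneg (integral_nonneg fun x => mul_nonneg (coverLabel_nonneg hw s i x) ?_) (hw i)
    exact neg_nonneg.2
      (Real.log_nonpos (coverWeight_nonneg hw s x) (coverWeight_le_one hw hsum x))
  have hwi : 0 < w i := (hw i).lt_of_ne' fun h => hpos.ne' (by simp [hq, coverLabel, h])
  have hgibbs : q * Real.log (w i / q) ≤ w i - q := by
    have := mul_le_mul_of_nonneg_left (Real.log_le_sub_one_of_pos (div_pos hwi hpos)) hnonneg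
    rwa [mul_sub, mul_one, mul_div_cancel₀ _ hpos.ne'] at this
  rw [integral_congr_ae (hW.mono fun x hx => coverLabel_mul_log_div hx.ne' hpos.ne'),
    integral_add hint ((integrable_coverLabel hA hw hi).mul_const _), integral_mul_const, ← hq]
  exact add_le_add le_rfl hgibbs

lemma sum_integral_coverLabel_mul_log_le [IsProbabilityMeasure μ] (hA : ∀ i, MeasurableSet (A i))
    (hw : ∀ i, 0 ≤ w i) (hsum : ∑ i ∈ s, w i ≤ 1) (hW : ∀ᵐ x ∂μ, 0 < coverWeight A w s x)
    (hlogW : Integrable (fun x => -Real.log (coverWeight A w s x)) μ) :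
    ∑ i ∈ s, ∫ x, coverLabel A w s i x *
        Real.log (coverLabel A w s i x / ∫ x, coverLabel A w s i x ∂μ) ∂μ ≤
      ∫ x, -Real.log (coverWeight A w s x) ∂μ := by
  have hint := fun i (hi : i ∈ s) => integrable_coverLabel (μ := μ) hA hw hi
  have hmass : ∑ i ∈ s, ∫ x, coverLabel A w s i x ∂μ = 1 := by
    rw [← integral_finsetSum _ hint,
      integral_congr_ae (hW.mono fun x hx => sum_coverLabel hx.ne')]
    simp
  have hcross : ∑ i ∈ s, ∫ x, coverLabel A w s i x * -Real.log (coverWeight A w s x) ∂μ =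
      ∫ x, -Real.log (coverWeight A w s x) ∂μ := by
    rw [← integral_finsetSum _ fun i hi => integrable_coverLabel_mul_neg_log hA hw hi hlogW]
    refine integral_congr_ae (hW.mono fun x hx => ?_)
    simp only [← Finset.sum_mul, sum_coverLabel hx.ne', one_mul]
  refine (Finset.sum_le_sum fun i hi =>
    integral_coverLabel_mul_log_le hA hw hi hsum hW hlogW).trans ?_
  rw [Finset.sum_add_distrib, Finset.sum_sub_distrib, hmass, hcross]
  linarith

end CoverLabel

section Cover

variable {ι α β : Type*} [MeasurableSpace α] [MeasurableSpace β] {γ : Measure (α × β)}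
  [IsProbabilityMeasure γ] {c : α × β → ℝ} {C ε : ℝ}

lemma exists_integral_neg_log_coverWeight_le [Fintype ι] {μ : Measure α} [IsProbabilityMeasure μ]
    {A : ι → Set α} (hA : ∀ i, MeasurableSet (A i)) (hcover : ⋃ i, A i = Set.univ) :
    ∃ w : ι → ℝ, (∀ i, 0 ≤ w i) ∧ ∑ i, w i ≤ 1 ∧
      (∀ᵐ x ∂μ, 0 < coverWeight A w Finset.univ x) ∧
      Integrable (fun x => -Real.log (coverWeight A w Finset.univ x)) μ ∧
      ∫ x, -Real.log (coverWeight A w Finset.univ x) ∂μ ≤ ∑ i, Real.negMulLog (μ.real (A i)) := by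
  have h := exists_coverWeight_setIntegral_le (μ := μ) hA Finset.univ
  simpa only [Finset.mem_univ, Set.iUnion_true, hcover, Set.mem_univ, true_imp_iff,
    integrableOn_univ, setIntegral_univ, probReal_univ, one_div, Real.log_inv, mul_neg,
    Real.negMulLog, neg_mul] using h

lemma exists_entCost_le_of_finite_cover [Fintype ι] (hc : Measurable c) (hcC : ∀ z, |c z| ≤ C)
    (hε : 0 ≤ ε) {X : Set α} (hX : ∀ᵐ x ∂γ.fst, x ∈ X) {A : ι → Set α}
    (hA : ∀ i, MeasurableSet (A i)) (hcover : ⋃ i, A i = Set.univ) {e : ι → ℝ}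
    (he : ∀ i, ∀ x ∈ A i ∩ X, ∀ x' ∈ A i ∩ X, ∀ y, c (x, y) ≤ c (x', y) + e i) :
    ∃ q : ι → ℝ, (∀ i, 0 ≤ q i) ∧ (∀ i, q i ≤ γ.fst.real (A i)) ∧ ∑ i, q i = 1 ∧
      entCost γ.fst γ.snd c ε ≤ (∫ z, c z ∂γ + ∑ i, q i * e i +
        ε * ∑ i, Real.negMulLog (γ.fst.real (A i)) : ℝ) := by
  obtain ⟨w, hw, hsum, hW, hlogW, hbound⟩ :=
    exists_integral_neg_log_coverWeight_le (μ := γ.fst) hA hcover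
  have hlabels : ∀ᵐ x ∂γ.fst, ∑ i, coverLabel A w Finset.univ i x = 1 :=
    hW.mono fun x hx => sum_coverLabel hx.ne'
  refine ⟨fun i => ∫ x, coverLabel A w Finset.univ i x ∂γ.fst,
    fun i => integral_nonneg (coverLabel_nonneg hw _ i),
    fun i => integral_coverLabel_le hA hw (Finset.mem_univ i), ?_, ?_⟩
  · rw [← integral_finsetSum _ fun i _ => integrable_coverLabel hA hw (Finset.mem_univ i),
      integral_congr_ae hlabels]
    simp
  · refine (entCost_le_of_labels hc hcC hε (measurable_coverLabel hA w _) (coverLabel_nonneg hw _)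
      hlabels (fun i => integrable_coverLabel_mul_log_div hA hw (Finset.mem_univ i) hW hlogW _)
      (fun i x => mem_of_coverLabel_ne_zero) hX he).trans (EReal.coe_le_coe_iff.2 ?_)
    exact add_le_add le_rfl (mul_le_mul_of_nonneg_left
      ((sum_integral_coverLabel_mul_log_le hA hw hsum hW hlogW).trans hbound) hε)

lemma entCost_le_of_finite_family [Fintype ι] (hc : Measurable c) (hcC : ∀ z, |c z| ≤ C)
    (hε : 0 ≤ ε) {X : Set α} (hX : ∀ᵐ x ∂γ.fst, x ∈ X) {e D : ℝ} (he0 : 0 ≤ e) (hD0 : 0 ≤ D)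
    (hD : ∀ x ∈ X, ∀ x' ∈ X, ∀ y, c (x, y) ≤ c (x', y) + D) {A : ι → Set α}
    (hA : ∀ i, MeasurableSet (A i))
    (he : ∀ i, ∀ x ∈ A i, ∀ x' ∈ A i, ∀ y, c (x, y) ≤ c (x', y) + e) :
    entCost γ.fst γ.snd c ε ≤ (∫ z, c z ∂γ + e + γ.fst.real (⋃ i, A i)ᶜ * D +
      ε * (∑ i, Real.negMulLog (γ.fst.real (A i)) +
        Real.negMulLog (γ.fst.real (⋃ i, A i)ᶜ)) : ℝ) := by
  let B : Option ι → Set α := fun o => o.elim (⋃ i, A i)ᶜ A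
  have hB : ∀ o, MeasurableSet (B o)
    | none => (MeasurableSet.iUnion hA).compl
    | some i => hA i
  have hcover : ⋃ o, B o = Set.univ := by
    rw [Set.iUnion_option]
    exact Set.compl_union_self _
  obtain ⟨q, hq0, hqB, hqsum, hle⟩ := exists_entCost_le_of_finite_cover hc hcC hε hX hB hcover
    (e := fun o => o.elim D fun _ => e) fun
      | none => fun x hx x' hx' => hD x hx.2 x' hx'.2
      | some i => fun x hx x' hx' => he i x hx.1 x' hx'.1
  refine hle.trans (EReal.coe_le_coe_iff.2 ?_)
  have hrest : q none * D ≤ γ.fst.real (⋃ i, A i)ᶜ * D :=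
    mul_le_mul_of_nonneg_right (hqB none) hD0
  simp only [Fintype.sum_option, Option.elim_none, Option.elim_some, ← Finset.sum_mul, B]
    at hqsum ⊢
  have hcells : (∑ i, q (some i)) * e ≤ e :=
    mul_le_of_le_one_left he0 (by linarith [hq0 none])
  linarith

lemma tendsto_measureReal_compl_iUnion_fin {μ : Measure α} [IsFiniteMeasure μ] {A : ℕ → Set α}
    (hA : ∀ n, MeasurableSet (A n)) (hcover : ⋃ n, A n = Set.univ) :
    Tendsto (fun K : ℕ => μ.real (⋃ n : Fin K, A n)ᶜ) atTop (𝓝 0) := by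
  have hanti : Antitone fun K : ℕ => (⋃ n : Fin K, A n)ᶜ := fun K M hKM =>
    Set.compl_subset_compl.2 (Set.iUnion_subset fun n =>
      Set.subset_iUnion (fun m : Fin M => A m) (Fin.castLE hKM n))
  have hempty : ⋂ K : ℕ, (⋃ n : Fin K, A n)ᶜ = ∅ := by
    refine Set.eq_empty_of_forall_notMem fun x hx => ?_
    obtain ⟨n, hn⟩ := Set.mem_iUnion.1 (hcover ▸ Set.mem_univ x)
    exact Set.mem_iInter.1 hx (n + 1) (Set.mem_iUnion.2 ⟨Fin.last n, hn⟩)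
  have hlim := tendsto_measure_iInter_atTop (μ := μ)
    (fun K => (MeasurableSet.iUnion fun n : Fin K => hA n).compl.nullMeasurableSet) hanti
    ⟨0, measure_ne_top _ _⟩
  rw [hempty, measure_empty] at hlim
  exact (ENNReal.tendsto_toReal ENNReal.zero_ne_top).comp hlim

lemma entCost_le_of_countable_cover (hc : Measurable c) (hcC : ∀ z, |c z| ≤ C) (hε : 0 ≤ ε)
    {X : Set α} (hX : ∀ᵐ x ∂γ.fst, x ∈ X) {e D : ℝ} (he0 : 0 ≤ e) (hD0 : 0 ≤ D)
    (hD : ∀ x ∈ X, ∀ x' ∈ X, ∀ y, c (x, y) ≤ c (x', y) + D) {A : ℕ → Set α}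
    (hA : ∀ n, MeasurableSet (A n)) (hcover : ⋃ n, A n = Set.univ)
    (he : ∀ n, ∀ x ∈ A n, ∀ x' ∈ A n, ∀ y, c (x, y) ≤ c (x', y) + e) {S : ℝ}
    (hS : ∀ K, ∑ n ∈ Finset.range K, Real.negMulLog (γ.fst.real (A n)) ≤ S) :
    entCost γ.fst γ.snd c ε ≤ (∫ z, c z ∂γ + e + ε * S : ℝ) := by
  have hrest := tendsto_measureReal_compl_iUnion_fin (μ := γ.fst) hA hcover
  have hlim : Tendsto (fun K : ℕ => ∫ z, c z ∂γ + e + γ.fst.real (⋃ n : Fin K, A n)ᶜ * D +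
      ε * (S + Real.negMulLog (γ.fst.real (⋃ n : Fin K, A n)ᶜ))) atTop
      (𝓝 (∫ z, c z ∂γ + e + ε * S)) := by
    simpa using ((hrest.mul_const D).const_add (∫ z, c z ∂γ + e)).add
      ((((Real.continuous_negMulLog.tendsto 0).comp hrest).const_add S).const_mul ε)
  refine ge_of_tendsto ((continuous_coe_real_ereal.tendsto _).comp hlim)
    (Eventually.of_forall fun K => ?_)
  refine (entCost_le_of_finite_family hc hcC hε hX he0 hD0 hD (fun n : Fin K => hA n)
    fun n : Fin K => he n).trans (EReal.coe_le_coe_iff.2 ?_)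
  rw [Fin.sum_univ_eq_sum_range fun n => Real.negMulLog (γ.fst.real (A n))]
  exact add_le_add le_rfl (mul_le_mul_of_nonneg_left (add_le_add (hS K) le_rfl) hε)

end Cover

section EntH

variable {α β : Type*} [MeasurableSpace α] [MeasurableSpace β]

lemma neg_le_entCost_zero (μ : Measure α) (ν : Measure β) {c : α × β → ℝ} {C : ℝ}
    (hcC : ∀ z, |c z| ≤ C) : ((-C : ℝ) : EReal) ≤ entCost μ ν c 0 := by
  refine le_sInf ?_
  rintro v ⟨γ, hγ, -, -, rfl⟩
  rw [EReal.coe_zero, zero_mul, add_zero, EReal.coe_le_coe_iff]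
  have hnorm := norm_integral_le_of_norm_le_const (f := c) (μ := γ) (ae_of_all _ hcC)
  rw [probReal_univ, mul_one] at hnorm
  exact (abs_le.1 hnorm).1

variable [PseudoMetricSpace α]

lemma exists_cover_of_entH_lt {μ : Measure α} [IsProbabilityMeasure μ] {δ r : ℝ}
    (h : entH δ μ < ENNReal.ofReal r) :
    ∃ A : ℕ → Set α, (∀ n, MeasurableSet (A n)) ∧
      (∀ n, Metric.ediam (A n) ≤ ENNReal.ofReal δ) ∧ ⋃ n, A n = Set.univ ∧
      ∀ K, ∑ n ∈ Finset.range K, Real.negMulLog (μ.real (A n)) ≤ r := by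
  simp only [entH, iInf_lt_iff] at h
  obtain ⟨A, ⟨hA, hdiam, hcover⟩, hlt⟩ := h
  refine ⟨A, hA, hdiam, hcover, fun K => ?_⟩
  have hr : 0 < r := ENNReal.ofReal_pos.1 (bot_le.trans_lt hlt)
  rw [← ENNReal.ofReal_le_ofReal_iff hr.le, ENNReal.ofReal_sum_of_nonneg fun n _ =>
    Real.negMulLog_nonneg measureReal_nonneg measureReal_le_one]
  exact (ENNReal.sum_le_tsum _).trans hlt.le

lemma entCost_le_of_entH_ne_top {γ : Measure (α × β)} [IsProbabilityMeasure γ] {c : α × β → ℝ}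
    (hc : Measurable c) {C : ℝ} (hcC : ∀ z, |c z| ≤ C) {L : ℝ≥0}
    (hL : ∀ y, LipschitzWith L fun x => c (x, y)) {X : Set α} (hX : ∀ᵐ x ∂γ.fst, x ∈ X)
    (hXb : Bornology.IsBounded X) {ε : ℝ} (hε : 0 ≤ ε) (hH : entH ε γ.fst ≠ ∞) :
    entCost γ.fst γ.snd c ε ≤
      (∫ z, c z ∂γ + L * ε + ε * (entH ε γ.fst).toReal : ℝ) := by
  have hnear : ∀ r, (entH ε γ.fst).toReal < r →
      entCost γ.fst γ.snd c ε ≤ (∫ z, c z ∂γ + L * ε + ε * r : ℝ) := by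
    intro r hr
    obtain ⟨A, hA, hdiam, hcover, hS⟩ :=
      exists_cover_of_entH_lt ((ENNReal.lt_ofReal_iff_toReal_lt hH).2 hr)
    refine entCost_le_of_countable_cover (D := L * Metric.diam X) hc hcC hε hX (by positivity)
      (by positivity) (fun x hx x' hx' y => ?_) hA hcover (fun n x hx x' hx' y => ?_) hS
    · have hdist := Metric.dist_le_diam_of_mem hXb hx hx'
      exact ((hL y).le_add_mul x x').trans (by gcongr)
    · have hdist : dist x x' ≤ ε :=
        (edist_le_ofReal hε).1 ((Metric.edist_le_ediam_of_mem hx hx').trans (hdiam n))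
      exact ((hL y).le_add_mul x x').trans (by gcongr)
  have hcont : Continuous fun r : ℝ => ((∫ z, c z ∂γ + L * ε + ε * r : ℝ) : EReal) :=
    continuous_coe_real_ereal.comp (by fun_prop)
  exact ge_of_tendsto (hcont.continuousWithinAt (s := Set.Ioi _)).tendsto
    (eventually_mem_nhdsWithin.mono hnear)

lemma entCost_le_add_entH (μ : Measure α) (ν : Measure β) [IsProbabilityMeasure μ]
    {c : α × β → ℝ} (hc : Measurable c) {C : ℝ} (hcC : ∀ z, |c z| ≤ C) {L : ℝ≥0}
    (hL : ∀ y, LipschitzWith L fun x => c (x, y)) {X : Set α} (hX : ∀ᵐ x ∂μ, x ∈ X)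
    (hXb : Bornology.IsBounded X) {ε : ℝ} (hε : 0 < ε) :
    entCost μ ν c ε ≤ entCost μ ν c 0 + (ε : EReal) * ((entH ε μ : ℝ≥0∞) : EReal) +
      (((L : ℝ) * ε : ℝ) : EReal) := by
  rcases eq_or_ne (entH ε μ) ∞ with hH | hH
  · rw [hH, EReal.coe_ennreal_top, EReal.coe_mul_top_of_pos hε, EReal.add_top_of_ne_bot
      ((EReal.bot_lt_coe _).trans_le (neg_le_entCost_zero μ ν hcC)).ne', EReal.top_add_coe]
    exact le_top
  have hcoe : (ε : EReal) * ((entH ε μ : ℝ≥0∞) : EReal) =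
      ((ε * (entH ε μ).toReal : ℝ) : EReal) := by
    rw [EReal.coe_mul, EReal.coe_ennreal_toReal hH]
  rw [hcoe, add_assoc, ← EReal.coe_add,
    ← EReal.sub_le_iff_le_add (Or.inl (EReal.coe_ne_bot _)) (Or.inl (EReal.coe_ne_top _))]
  refine le_sInf ?_
  rintro v ⟨γ, hγ, rfl, rfl, rfl⟩
  rw [EReal.coe_zero, zero_mul, add_zero,
    EReal.sub_le_iff_le_add (Or.inl (EReal.coe_ne_bot _)) (Or.inl (EReal.coe_ne_top _)),
    ← EReal.coe_add]
  refine (entCost_le_of_entH_ne_top hc hcC hL hX hXb hε.le hH).trans (EReal.coe_le_coe_iff.2 ?_)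
  linarith

end EntH

section Swap

variable {α β : Type*} [MeasurableSpace α] [MeasurableSpace β]

lemma ent_map_swap (γ q : Measure (α × β)) [SigmaFinite γ] [SigmaFinite q] :
    Ent (γ.map Prod.swap) (q.map Prod.swap) = Ent γ q := by
  have hswap : MeasurableEmbedding (Prod.swap : α × β → β × α) :=
    MeasurableEquiv.prodComm.measurableEmbedding
  have hac : γ.map Prod.swap ≪ q.map Prod.swap ↔ γ ≪ q := by
    refine ⟨fun h => ?_, fun h => h.map measurable_swap⟩
    simpa [Measure.map_map measurable_swap measurable_swap] using
      h.map (measurable_swap (α := β) (β := α))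
  have hdens : (fun x => ((γ.map Prod.swap).rnDeriv (q.map Prod.swap) (Prod.swap x)).toReal *
      Real.log ((γ.map Prod.swap).rnDeriv (q.map Prod.swap) (Prod.swap x)).toReal) =ᵐ[q]
      fun x => (γ.rnDeriv q x).toReal * Real.log (γ.rnDeriv q x).toReal := by
    filter_upwards [hswap.rnDeriv_map γ q] with x hx
    rw [hx]
  rw [Ent, Ent]
  simp only [hac, hswap.integrable_map_iff, hswap.integral_map, Function.comp_def,
    integral_congr_ae hdens, integrable_congr hdens]

lemma entCost_le_entCost_swap (μ : Measure α) (ν : Measure β) [IsProbabilityMeasure μ]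
    [IsProbabilityMeasure ν] (c : α × β → ℝ) (ε : ℝ) :
    entCost μ ν c ε ≤ entCost ν μ (fun z => c z.swap) ε := by
  refine le_sInf ?_
  rintro v ⟨γ, hγ, hfst, hsnd, rfl⟩
  refine sInf_le ⟨γ.map Prod.swap, Measure.isProbabilityMeasure_map measurable_swap.aemeasurable,
    by rw [Measure.fst_map_swap, hsnd], by rw [Measure.snd_map_swap, hfst], ?_⟩
  have hcost : ∫ z, c z ∂γ.map Prod.swap = ∫ z, c z.swap ∂γ :=
    MeasurableEquiv.prodComm.measurableEmbedding.integral_map c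
  rw [hcost, ← ent_map_swap γ (ν.prod μ), Measure.prod_swap]

lemma entCost_swap (μ : Measure α) (ν : Measure β) [IsProbabilityMeasure μ]
    [IsProbabilityMeasure ν] (c : α × β → ℝ) (ε : ℝ) :
    entCost ν μ (fun z => c z.swap) ε = entCost μ ν c ε :=
  le_antisymm (entCost_le_entCost_swap ν μ _ ε) (entCost_le_entCost_swap μ ν c ε)

lemma entCost_congr {μ : Measure α} {ν : Measure β} {c c' : α × β → ℝ}
    (h : ∀ γ : Measure (α × β), γ.fst = μ → γ.snd = ν → c =ᵐ[γ] c') (ε : ℝ) :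
    entCost μ ν c ε = entCost μ ν c' ε := by
  rw [entCost, entCost]
  congr 1
  ext v
  refine exists_congr fun γ => and_congr_right fun _ => and_congr_right fun hfst =>
    and_congr_right fun hsnd => ?_
  rw [integral_congr_ae (h γ hfst hsnd)]

end Swap

lemma ae_mem_msupport {α : Type*} [TopologicalSpace α] [SecondCountableTopology α]
    [MeasurableSpace α] (μ : Measure α) : ∀ᵐ x ∂μ, x ∈ msupport μ := by
  refine measure_null_of_locally_null _ fun x hx => ?_
  obtain ⟨U, hU, hxU, h0⟩ : ∃ U, IsOpen U ∧ x ∈ U ∧ μ U = 0 := by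
    simpa [msupport] using hx
  exact ⟨U, mem_nhdsWithin_of_mem_nhds (hU.mem_nhds hxU), h0⟩

lemma exists_bounded_lipschitzWith_extension {α : Type*} [PseudoMetricSpace α] {s : Set α}
    (hs : Bornology.IsBounded s) {f : α → ℝ} {L : ℝ≥0} (hf : LipschitzOnWith L f s) :
    ∃ (g : α → ℝ) (C : ℝ), LipschitzWith L g ∧ Set.EqOn f g s ∧ ∀ x, |g x| ≤ C := by
  obtain ⟨g, hg, hfg⟩ := hf.extend_real
  obtain ⟨C, hC⟩ := (hg.isBounded_image hs).exists_norm_le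
  refine ⟨fun x => max (-|C|) (min |C| (g x)), |C|, (hg.const_min _).const_max _, fun x hx => ?_,
    fun x => abs_le.2 ⟨le_max_left _ _, max_le (by linarith [abs_nonneg C]) (min_le_left _ _)⟩⟩
  have hgx := abs_le.1 ((hC _ (Set.mem_image_of_mem g hx)).trans (le_abs_self C))
  simp only [hfg hx, min_eq_right hgx.2, max_eq_right hgx.1]

theorem entCost_upper_bound_lipschitz_general {α β : Type*} [PseudoMetricSpace α]
    [PseudoMetricSpace β] [SecondCountableTopology α] [SecondCountableTopology β]
    [MeasurableSpace α] [MeasurableSpace β] [OpensMeasurableSpace α] [OpensMeasurableSpace β]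
    {μ : Measure α} {ν : Measure β} [IsProbabilityMeasure μ] [IsProbabilityMeasure ν]
    (hμ : Bornology.IsBounded (msupport μ)) (hν : Bornology.IsBounded (msupport ν))
    {c : α × β → ℝ} {L : ℝ≥0} (hc : LipschitzOnWith L c (msupport μ ×ˢ msupport ν))
    {ε : ℝ} (hε : 0 < ε) :
    entCost μ ν c ε ≤ entCost μ ν c 0
      + (ε : EReal) * ((min (entH ε μ) (entH ε ν) : ℝ≥0∞) : EReal)
      + (((L : ℝ) * ε : ℝ) : EReal) := by
  obtain ⟨g, C, hg, hcg, hC⟩ := exists_bounded_lipschitzWith_extension (hμ.prod hν) hc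
  have hae : ∀ γ : Measure (α × β), γ.fst = μ → γ.snd = ν → c =ᵐ[γ] g := by
    rintro γ rfl rfl
    filter_upwards [ae_of_ae_map measurable_fst.aemeasurable (ae_mem_msupport γ.fst),
      ae_of_ae_map measurable_snd.aemeasurable (ae_mem_msupport γ.snd)] with z hfst hsnd
    exact hcg ⟨hfst, hsnd⟩
  rw [entCost_congr hae, entCost_congr hae]
  have hgm : Measurable g := hg.continuous.measurable
  rcases min_choice (entH ε μ) (entH ε ν) with hmin | hmin <;> rw [hmin]
  · exact entCost_le_add_entH μ ν hgm hC
      (fun y => mul_one L ▸ hg.comp (LipschitzWith.prodMk_right y)) (ae_mem_msupport μ) hμ hε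
  · rw [← entCost_swap μ ν g ε, ← entCost_swap μ ν g 0]
    exact entCost_le_add_entH ν μ (hgm.comp measurable_swap) (fun z => hC z.swap)
      (fun x => mul_one L ▸ hg.comp (LipschitzWith.prodMk_left x)) (ae_mem_msupport ν) hν hε

/-- Upper bound for Lipschitz costs: `v_ε ≤ v₀ + ε min(H_ε(μ⁻), H_ε(μ⁺)) + L ε`. -/
theorem entCost_upper_bound_lipschitz {d : ℕ}
    (μm μp : Measure (EuclideanSpace ℝ (Fin d)))
    [IsProbabilityMeasure μm] [IsProbabilityMeasure μp]
    (hXm : IsCompact (msupport μm)) (hXp : IsCompact (msupport μp))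
    (c : EuclideanSpace ℝ (Fin d) × EuclideanSpace ℝ (Fin d) → ℝ)
    (L : ℝ≥0) (hc : LipschitzOnWith L c (msupport μm ×ˢ msupport μp)) :
    ∀ ε : ℝ, 0 < ε →
      entCost μm μp c ε ≤ entCost μm μp c 0
        + (ε : EReal) * ((min (entH ε μm) (entH ε μp) : ℝ≥0∞) : EReal)
        + (((L : ℝ) * ε : ℝ) : EReal) :=
  fun _ hε => entCost_upper_bound_lipschitz_general hXm.isBounded hXp.isBounded hc hε
end
end
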